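/- arXiv:math/0404424 — 2 statements merged into one kernel-verified Lean document; each statement's English description precedes it below -/
import Mathlib

section
/- Let Ω ⊂ ℝⁿ be a bounded open set with smooth boundary, T > 0, and let F be continuous, uniformly elliptic with constants 0 < λ ≤ Λ, satisfying the structure condition with constant γ, the joint modulus bound |F(M,P,r,x,t) - F(M,P,r,y,s)| ≤ σ₁(|x-y|) + σ₂(|t-s|) with σ₂(h) ≤ C₀h, and sup_{(x,t)}|F(0,0,0,x,t)| ≤ K. Suppose that for every h ∈ (0,1] the Rothe approximations z_{n,h} exist, and let U_h be the corresponding Rothe interpolants on Ω̄ × [0,T]. Then every sequence h_k ↓ 0 has a subsequence along which U_{h_k} converges uniformly on Ω̄ × [0,T] to a continuous function U, and any such limit U is Lipschitz in time: there is a constant C, independent of the subsequence, with |U(x,t) - U(x,s)| ≤ C|t - s| for all x ∈ Ω̄ and t, s ∈ [0,T]. -/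
/-!
The interpolants are shown to be equicontinuous with constants independent of `h`; Arzelà–Ascoli
(`ascoli_subseq`) then gives the subsequence, and the Lipschitz bound in time passes to every
pointwise limit.

All estimates come from a comparison principle for continuous viscosity
sub- and supersolutions (`comparison`). It is proved by sup- and inf-convolution: the convolutions
are convex up to a quadratic, and at a maximum of their sum, perturbed by a small linear function,
both have a second-order expansion (`jensen_alexandrov`). The slopes of the perturbations whose
contact points have no expansion form a null set, because the subgradients of a convex function are
Lipschitz on a contact set (`subgrad_lip`) and therefore differentiable almost everywhere there
(`second_order_ae`). The expansions are second-order jets of the original functions, with ordered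
Hessians.

* Time: at an interior extremum of the first step a constant is a test function, so
  `|z 1| ≤ K h` (`rothe_first`). Comparing consecutive steps, each of which changes the operator by
  at most `C₀ h`, gives `|z (n + 1) - z n| ≤ (K + n C₀ h) h` (`rothe_increment`).
* Boundary: the smooth boundary has a uniform exterior ball (`exterior_ball`), and an exponential
  barrier centred in such a ball is a strict supersolution with constants depending only on the
  ellipticity, `gam`, `K` and `Ω`, so that `|z n|` is bounded by `L` times the distance to the
  boundary, uniformly in `n` and `h` (`boundary_lip`).
* Space: the translate of `z n` by `ξ` solves on `Ω - ξ` an equation whose operator differs by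
  `σ₁ ‖ξ‖`. Comparison on `Ω ∩ (Ω - ξ)`, with the boundary bound on its frontier, gives the modulus
  `L ‖ξ‖ + n h σ₁ ‖ξ‖` (`rothe_spatial`).
-/

open scoped RealInnerProductSpace
open MeasureTheory Filter Topology Asymptotics Metric Set

noncomputable section

abbrev Eucl (d : ℕ) := EuclideanSpace ℝ (Fin d)

open Classical in
noncomputable def eigs {d : ℕ} (M : Matrix (Fin d) (Fin d) ℝ) : Fin d → ℝ :=
  if h : M.IsHermitian then h.eigenvalues else 0

noncomputable def specNorm {d : ℕ} (M : Matrix (Fin d) (Fin d) ℝ) : ℝ := ⨆ i, |eigs M i|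
noncomputable def posPartNorm {d : ℕ} (M : Matrix (Fin d) (Fin d) ℝ) : ℝ := ⨆ i, max (eigs M i) 0
noncomputable def negPartNorm {d : ℕ} (M : Matrix (Fin d) (Fin d) ℝ) : ℝ := ⨆ i, max (-(eigs M i)) 0
noncomputable def posPartTrace {d : ℕ} (M : Matrix (Fin d) (Fin d) ℝ) : ℝ := ∑ i, max (eigs M i) 0
noncomputable def negPartTrace {d : ℕ} (M : Matrix (Fin d) (Fin d) ℝ) : ℝ := ∑ i, max (-(eigs M i)) 0

noncomputable def pucciPlus {d : ℕ} (lam Lam : ℝ) (M : Matrix (Fin d) (Fin d) ℝ) : ℝ :=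
  -lam * posPartTrace M + Lam * negPartTrace M

noncomputable def pucciMinus {d : ℕ} (lam Lam : ℝ) (M : Matrix (Fin d) (Fin d) ℝ) : ℝ :=
  -Lam * posPartTrace M + lam * negPartTrace M

noncomputable def gradAt {d : ℕ} (φ : Eucl d → ℝ) (x : Eucl d) : Eucl d :=
  (EuclideanSpace.equiv (Fin d) ℝ).symm (fun i => fderiv ℝ φ x (EuclideanSpace.single i 1))

noncomputable def hessAt {d : ℕ} (φ : Eucl d → ℝ) (x : Eucl d) : Matrix (Fin d) (Fin d) ℝ :=
  Matrix.of fun i j =>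
    fderiv ℝ (fun y => fderiv ℝ φ y (EuclideanSpace.single j 1)) x (EuclideanSpace.single i 1)

noncomputable def quadForm {d : ℕ} (M : Matrix (Fin d) (Fin d) ℝ) (v : Eucl d) : ℝ :=
  ∑ i, ∑ j, M i j * v i * v j

def ViscSubsol {d : ℕ} (Ω : Set (Eucl d))
    (G : Matrix (Fin d) (Fin d) ℝ → Eucl d → ℝ → Eucl d → ℝ)
    (g : Eucl d → ℝ) (u : Eucl d → ℝ) : Prop :=
  ∀ x₀ ∈ Ω, ∀ φ : Eucl d → ℝ, ContDiffAt ℝ 2 φ x₀ →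
    IsLocalMax (fun x => u x - φ x) x₀ →
    G (hessAt φ x₀) (gradAt φ x₀) (u x₀) x₀ ≤ g x₀

def ViscSupersol {d : ℕ} (Ω : Set (Eucl d))
    (G : Matrix (Fin d) (Fin d) ℝ → Eucl d → ℝ → Eucl d → ℝ)
    (g : Eucl d → ℝ) (u : Eucl d → ℝ) : Prop :=
  ∀ x₀ ∈ Ω, ∀ φ : Eucl d → ℝ, ContDiffAt ℝ 2 φ x₀ →
    IsLocalMin (fun x => u x - φ x) x₀ →
    g x₀ ≤ G (hessAt φ x₀) (gradAt φ x₀) (u x₀) x₀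

def ViscSol {d : ℕ} (Ω : Set (Eucl d))
    (G : Matrix (Fin d) (Fin d) ℝ → Eucl d → ℝ → Eucl d → ℝ)
    (g : Eucl d → ℝ) (u : Eucl d → ℝ) : Prop :=
  ViscSubsol Ω G g u ∧ ViscSupersol Ω G g u

def UniformlyElliptic {d : ℕ} (lam Lam : ℝ) (X : Set (Eucl d)) (Tset : Set ℝ)
    (F : Matrix (Fin d) (Fin d) ℝ → Eucl d → ℝ → Eucl d → ℝ → ℝ) : Prop :=
  ∀ M N : Matrix (Fin d) (Fin d) ℝ, M.IsSymm → N.PosSemidef →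
    ∀ (P : Eucl d) (v : ℝ), ∀ x ∈ X, ∀ t ∈ Tset,
      -Lam * specNorm N ≤ F (M + N) P v x t - F M P v x t ∧
      F (M + N) P v x t - F M P v x t ≤ -lam * specNorm N

def IsModulus (σ : ℝ → ℝ) : Prop := Monotone σ ∧ Continuous σ ∧ σ 0 = 0

def StructureCondition {d : ℕ} (lam Lam gam : ℝ) (ω : ℝ → ℝ → ℝ)
    (X : Set (Eucl d)) (Tset : Set ℝ)
    (F : Matrix (Fin d) (Fin d) ℝ → Eucl d → ℝ → Eucl d → ℝ → ℝ) : Prop :=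
  (∀ R > 0, IsModulus (ω R)) ∧
  ∀ R > 0, ∀ M N : Matrix (Fin d) (Fin d) ℝ, M.IsSymm → N.IsSymm →
    ∀ (P Q : Eucl d) (r s : ℝ), |r| ≤ R → |s| ≤ R → ∀ x ∈ X, ∀ t ∈ Tset,
      pucciMinus lam Lam (M - N) - gam * ‖P - Q‖ - ω R (max (s - r) 0)
          ≤ F M P r x t - F N Q s x t ∧
      F M P r x t - F N Q s x t
          ≤ pucciPlus lam Lam (M - N) + gam * ‖P - Q‖ + ω R (max (r - s) 0)

noncomputable def supConv {d : ℕ} (Ω : Set (Eucl d)) (u : Eucl d → ℝ) (ε : ℝ) (x : Eucl d) : ℝ :=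
  sSup ((fun y => u y - ‖x - y‖ ^ 2 / (2 * ε)) '' closure Ω)

noncomputable def infConv {d : ℕ} (Ω : Set (Eucl d)) (u : Eucl d → ℝ) (ε : ℝ) (x : Eucl d) : ℝ :=
  sInf ((fun y => u y + ‖x - y‖ ^ 2 / (2 * ε)) '' closure Ω)

noncomputable def supNorm {d : ℕ} (Ω : Set (Eucl d)) (u : Eucl d → ℝ) : ℝ :=
  sSup ((fun y => |u y|) '' closure Ω)

def RotheStep {d : ℕ} (Ω : Set (Eucl d))
    (F : Matrix (Fin d) (Fin d) ℝ → Eucl d → ℝ → Eucl d → ℝ → ℝ)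
    (h : ℝ) (m : ℕ) (zprev znext : Eucl d → ℝ) : Prop :=
  ContinuousOn znext (closure Ω) ∧
  ViscSol Ω (fun M P r x => F M P r x ((m + 1) * h) + r / h) (fun x => zprev x / h) znext ∧
  ∀ x ∈ frontier Ω, znext x = 0

noncomputable def rotheInterp {d : ℕ} (z : ℕ → Eucl d → ℝ) (h : ℝ) (x : Eucl d) (t : ℝ) : ℝ :=
  ((⌊t / h⌋₊ + 1 : ℝ) * h - t) / h * z ⌊t / h⌋₊ x + (t - (⌊t / h⌋₊ : ℝ) * h) / h * z (⌊t / h⌋₊ + 1) x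

def HasSmoothBoundary {d : ℕ} (Ω : Set (Eucl d)) : Prop :=
  ∃ f : Eucl d → ℝ, ContDiff ℝ (⊤ : ℕ∞) f ∧ Ω = {x | f x < 0} ∧ ∀ x ∈ frontier Ω, fderiv ℝ f x ≠ 0

def C21 {d : ℕ} (φ : Eucl d → ℝ → ℝ) : Prop :=
  (∀ t, ContDiff ℝ 2 fun x => φ x t) ∧
  (∀ x, ContDiff ℝ 1 fun t => φ x t) ∧
  Continuous (fun p : Eucl d × ℝ => φ p.1 p.2) ∧
  Continuous (fun p : Eucl d × ℝ => hessAt (fun x => φ x p.2) p.1) ∧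
  Continuous (fun p : Eucl d × ℝ => gradAt (fun x => φ x p.2) p.1) ∧
  Continuous (fun p : Eucl d × ℝ => deriv (φ p.1) p.2)

def ParabolicViscSubsol {d : ℕ} (Ω : Set (Eucl d)) (T : ℝ)
    (F : Matrix (Fin d) (Fin d) ℝ → Eucl d → ℝ → Eucl d → ℝ → ℝ)
    (u : Eucl d × ℝ → ℝ) : Prop :=
  ∀ φ : Eucl d → ℝ → ℝ, C21 φ → ∀ ε > (0:ℝ),
    (∀ x ∈ closure Ω, ∀ t ∈ Icc (0:ℝ) T,
      ε ≤ deriv (φ x) t +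
        F (hessAt (fun y => φ y t) x) (gradAt (fun y => φ y t) x) (φ x t) x t) →
    ¬ ∃ p ∈ Ω ×ˢ Ioc (0:ℝ) T,
        IsLocalMaxOn (fun q : Eucl d × ℝ => u q - φ q.1 q.2) (Ω ×ˢ Ioc (0:ℝ) T) p ∧
        u p - φ p.1 p.2 = 0

def ParabolicViscSupersol {d : ℕ} (Ω : Set (Eucl d)) (T : ℝ)
    (F : Matrix (Fin d) (Fin d) ℝ → Eucl d → ℝ → Eucl d → ℝ → ℝ)
    (u : Eucl d × ℝ → ℝ) : Prop :=
  ∀ φ : Eucl d → ℝ → ℝ, C21 φ → ∀ ε > (0:ℝ),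
    (∀ x ∈ closure Ω, ∀ t ∈ Icc (0:ℝ) T,
      deriv (φ x) t +
        F (hessAt (fun y => φ y t) x) (gradAt (fun y => φ y t) x) (φ x t) x t ≤ -ε) →
    ¬ ∃ p ∈ Ω ×ˢ Ioc (0:ℝ) T,
        IsLocalMinOn (fun q : Eucl d × ℝ => u q - φ q.1 q.2) (Ω ×ˢ Ioc (0:ℝ) T) p ∧
        u p - φ p.1 p.2 = 0



/-! ### Convex functions: Lipschitz subgradients on contact sets and second-order expansions -/

/-- If `s` is a subgradient at `z` of a function touched from above at `x` by a paraboloid of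
opening `κ` and slope `c`, then `s` and `c` differ by at most `2 * κ * ‖z - x‖`. -/
lemma subgrad_lip {V : Type*} [NormedAddCommGroup V] [InnerProductSpace ℝ V]
    {f : V → ℝ} {κ : ℝ} (hκ : 0 < κ) {x z s c : V}
    (hs : ∀ y, f z + ⟪s, y - z⟫ ≤ f y)
    (hc : ∀ y, f y ≤ f x + ⟪c, y - x⟫ + κ / 2 * ‖y - x‖ ^ 2)
    (hz : f x + ⟪c, z - x⟫ ≤ f z) : ‖s - c‖ ≤ 2 * κ * ‖z - x‖ := by
  by_contra! hcon
  set e := s - c with he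
  have hepos : 0 < ‖e‖ := lt_of_le_of_lt (by positivity) hcon
  have h1 := hs (z + (1 / (2 * κ)) • e)
  have h2 := hc (z + (1 / (2 * κ)) • e)
  have h3 : z + (1 / (2 * κ)) • e - x = (z - x) + (1 / (2 * κ)) • e := by abel
  rw [h3] at h2
  rw [add_sub_cancel_left] at h1
  have h4 : ‖(z - x) + (1 / (2 * κ)) • e‖ ≤ ‖z - x‖ + (1 / (2 * κ)) * ‖e‖ := by
    refine (norm_add_le _ _).trans ?_
    rw [norm_smul, Real.norm_of_nonneg (by positivity)]
  have h5 : ‖z - x‖ + (1 / (2 * κ)) * ‖e‖ < ‖e‖ / κ := by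
    have : ‖z - x‖ < ‖e‖ / (2 * κ) := by
      rw [lt_div_iff₀ (by positivity)]; linarith
    have h6 : ‖e‖ / κ = ‖e‖ / (2 * κ) + (1 / (2 * κ)) * ‖e‖ := by field_simp; ring
    linarith
  have h7 : ‖(z - x) + (1 / (2 * κ)) • e‖ ^ 2 < (‖e‖ / κ) ^ 2 :=
    pow_lt_pow_left₀ (h4.trans_lt h5) (norm_nonneg _) (by norm_num)
  have h8 : ⟪s, (1 / (2 * κ)) • e⟫ - ⟪c, (1 / (2 * κ)) • e⟫ = ‖e‖ ^ 2 / (2 * κ) := by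
    rw [← inner_sub_left, ← he, inner_smul_right, real_inner_self_eq_norm_sq]; ring
  rw [inner_add_right] at h2
  have h9 : κ / 2 * (‖e‖ / κ) ^ 2 = ‖e‖ ^ 2 / (2 * κ) := by field_simp
  have h10 := mul_lt_mul_of_pos_left h7 (half_pos hκ)
  linarith

/-- A function on `[0,1]` whose subgradients are within `ε` of the affine function `α + β t`
has increment within `ε` of `α + β / 2`. -/
lemma one_dim_taylor {g σ : ℝ → ℝ} {α β ε : ℝ}
    (hg : ∀ t ∈ Icc (0:ℝ) 1, ∀ t' ∈ Icc (0:ℝ) 1, g t + σ t * (t' - t) ≤ g t')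
    (hσ : ∀ t ∈ Icc (0:ℝ) 1, |σ t - α - β * t| ≤ ε) :
    |g 1 - g 0 - α - β / 2| ≤ ε := by
  -- Telescoping over the partition of `[0,1]` into `N` equal pieces.
  have key : ∀ N : ℕ, 0 < N → ∀ k : ℕ, k ≤ N →
      g (k / N) - g 0 ≤ k * α / N + β * k * (k + 1) / (2 * N ^ 2) + k * ε / N ∧
      k * α / N + β * k * (k - 1) / (2 * N ^ 2) - k * ε / N ≤ g (k / N) - g 0 := by
    intro N hN k
    have hN' : (0:ℝ) < N := by exact_mod_cast hN
    induction k with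
    | zero => intro _; simp
    | succ k ih =>
      intro hk
      obtain ⟨i1, i2⟩ := ih (by omega)
      have hk' : (k:ℝ) + 1 ≤ N := by exact_mod_cast hk
      have hk0 : (0:ℝ) ≤ k := by positivity
      have m1 : (k:ℝ) / N ∈ Icc (0:ℝ) 1 := ⟨by positivity, by rw [div_le_one hN']; linarith⟩
      have m2 : ((k:ℝ) + 1) / N ∈ Icc (0:ℝ) 1 := ⟨by positivity, by rw [div_le_one hN']; linarith⟩
      have a1 := hg _ m1 _ m2
      have a2 := hg _ m2 _ m1
      have b1 := abs_le.1 (hσ _ m1)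
      have b2 := abs_le.1 (hσ _ m2)
      have e1 : ((k:ℝ) + 1) / N - k / N = 1 / N := by field_simp; ring
      have e2 : (k:ℝ) / N - (k + 1) / N = -(1 / N) := by field_simp; ring
      rw [e1] at a1
      rw [e2] at a2
      have c1 : (α + β * (k / N) - ε) * (1 / N) ≤ σ (k / N) * (1 / N) :=
        mul_le_mul_of_nonneg_right (by linarith) (by positivity)
      have c2 : σ ((k + 1) / N) * (1 / N) ≤ (α + β * ((k + 1) / N) + ε) * (1 / N) :=
        mul_le_mul_of_nonneg_right (by linarith) (by positivity)
      push_cast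
      constructor
      · have : ((k:ℝ) + 1) * α / N + β * (k + 1) * (k + 1 + 1) / (2 * N ^ 2) + (k + 1) * ε / N
          = (k * α / N + β * k * (k + 1) / (2 * N ^ 2) + k * ε / N)
            + (α + β * ((k + 1) / N) + ε) * (1 / N) := by field_simp; ring
        rw [this]; linarith
      · have : ((k:ℝ) + 1) * α / N + β * (k + 1) * (k + 1 - 1) / (2 * N ^ 2) - (k + 1) * ε / N
          = (k * α / N + β * k * (k - 1) / (2 * N ^ 2) - k * ε / N)
            + (α + β * (k / N) - ε) * (1 / N) := by field_simp; ring
        rw [this]; linarith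
  have lim : Tendsto (fun N : ℕ => |β| / 2 * (1 / ((N:ℝ) + 1))) atTop (𝓝 (|β| / 2 * 0)) :=
    tendsto_one_div_add_atTop_nhds_zero_nat.const_mul _
  have fin : ∀ N : ℕ, |g 1 - g 0 - α - β / 2| - ε ≤ |β| / 2 * (1 / ((N:ℝ) + 1)) := by
    intro N
    have hN' : (0:ℝ) < (N:ℝ) + 1 := by positivity
    obtain ⟨k1, k2⟩ := key (N + 1) (by omega) (N + 1) le_rfl
    push_cast at k1 k2
    rw [div_self hN'.ne'] at k1 k2
    have f1 : ((N:ℝ) + 1) * α / (N + 1) + β * (N + 1) * (N + 1 + 1) / (2 * (N + 1) ^ 2)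
        + (N + 1) * ε / (N + 1) = α + β / 2 + β / 2 * (1 / (N + 1)) + ε := by field_simp; ring
    have f2 : ((N:ℝ) + 1) * α / (N + 1) + β * (N + 1) * (N + 1 - 1) / (2 * (N + 1) ^ 2)
        - (N + 1) * ε / (N + 1) = α + β / 2 - β / 2 * (1 / (N + 1)) - ε := by field_simp; ring
    rw [f1] at k1
    rw [f2] at k2
    have hp : (0:ℝ) ≤ 1 / ((N:ℝ) + 1) := by positivity
    have g1 : β / 2 * (1 / ((N:ℝ) + 1)) ≤ |β| / 2 * (1 / ((N:ℝ) + 1)) :=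
      mul_le_mul_of_nonneg_right (by linarith [le_abs_self β]) hp
    have : |g 1 - g 0 - α - β / 2| ≤ ε + |β| / 2 * (1 / ((N:ℝ) + 1)) := by
      rw [abs_le]; constructor <;> linarith
    linarith
  have := ge_of_tendsto' lim fin
  linarith

/-- Near a Lebesgue density point `x` of `E`, every `z` is within `ε * ‖z - x‖` of `E`. -/
lemma density_near {d : ℕ} (μ : Measure (Eucl d)) [μ.IsAddHaarMeasure] {E : Set (Eucl d)}
    {x : Eucl d} (hx : x ∈ E)
    (hd : Tendsto (fun r => μ (E ∩ closedBall x r) / μ (closedBall x r)) (𝓝[>] 0) (𝓝 1))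
    {ε : ℝ} (hε : 0 < ε) (hε1 : ε ≤ 1) :
    ∀ᶠ z in 𝓝 x, ∃ z' ∈ E, ‖z - z'‖ ≤ ε * ‖z - x‖ := by
  set c : ENNReal := ENNReal.ofReal ((ε / 2) ^ Module.finrank ℝ (Eucl d)) with hc
  have hc0 : 0 < c := by rw [hc, ENNReal.ofReal_pos]; positivity
  have h1 : (1 - c : ENNReal) < 1 := ENNReal.sub_lt_self (by simp) (by simp) hc0.ne'
  have h2 := hd.eventually (lt_mem_nhds h1)
  rw [eventually_nhdsWithin_iff, Metric.eventually_nhds_iff] at h2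
  obtain ⟨ρ, hρ, h2⟩ := h2
  rw [Metric.eventually_nhds_iff]
  refine ⟨ρ / 2, by positivity, fun z hz => ?_⟩
  rcases eq_or_ne z x with rfl | hzx
  · exact ⟨z, hx, by simp⟩
  have ht : 0 < ‖z - x‖ := by rwa [norm_pos_iff, sub_ne_zero]
  rw [dist_eq_norm] at hz
  set t := ‖z - x‖ with htdef
  have h3 := h2 (y := 2 * t) (by simp [abs_of_pos ht]; linarith) (by simp; linarith)
  by_contra! hcon
  have hsub : closedBall z (ε * t) ⊆ closedBall x (2 * t) := by
    refine closedBall_subset_closedBall' ?_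
    rw [dist_eq_norm, ← htdef]; nlinarith
  have hsub2 : E ∩ closedBall x (2 * t) ⊆ closedBall x (2 * t) \ closedBall z (ε * t) := by
    rintro w ⟨hw, hw'⟩
    refine ⟨hw', fun hw2 => ?_⟩
    rw [mem_closedBall, dist_comm, dist_eq_norm] at hw2
    exact absurd hw2 (not_le.2 (hcon w hw))
  have hfin : μ (closedBall x (2 * t)) ≠ ⊤ := measure_closedBall_lt_top.ne
  have hpos : μ (closedBall x (2 * t)) ≠ 0 := (measure_closedBall_pos μ x (by positivity)).ne'
  have e1 : μ (closedBall z (ε * t)) = c * μ (closedBall x (2 * t)) := by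
    have : ε * t = (ε / 2) * (2 * t) := by ring
    rw [this, Measure.addHaar_closedBall_mul μ z (by positivity) (by positivity),
      Measure.addHaar_closedBall_center μ x]
  have h4 := measure_mono (μ := μ) hsub2
  rw [measure_sdiff hsub measurableSet_closedBall.nullMeasurableSet
    (measure_closedBall_lt_top).ne, e1] at h4
  have h5 : μ (closedBall x (2 * t)) - c * μ (closedBall x (2 * t))
      = (1 - c) * μ (closedBall x (2 * t)) := by
    rw [ENNReal.sub_mul (fun _ _ => hfin), one_mul]
  rw [h5] at h4
  have h6 := (ENNReal.div_le_iff hpos hfin).2 h4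
  exact absurd h3 (not_lt.2 h6)

/-- `A` has the second-order expansion at `x` with slope `a` and Hessian form
`w ↦ ⟪S w, w⟫`. -/
def SecondOrder {d : ℕ} (A : Eucl d → ℝ) (a x : Eucl d) (S : Eucl d →L[ℝ] Eucl d) : Prop :=
  ∀ ε > 0, ∀ᶠ y in 𝓝 x, |A y - A x - ⟪a, y - x⟫ - ⟪S (y - x), y - x⟫ / 2| ≤ ε * ‖y - x‖ ^ 2

/-- Alexandrov's theorem on a contact set: a convex function (given with a selection `a` of
subgradients) is twice differentiable at almost every point where it is touched from above by
a paraboloid of fixed opening. -/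
lemma second_order_ae {d : ℕ} (μ : Measure (Eucl d)) [μ.IsAddHaarMeasure]
    {A : Eucl d → ℝ} {a : Eucl d → Eucl d} {κ : ℝ} (hκ : 0 < κ) {E : Set (Eucl d)}
    (ha : ∀ x y, A x + ⟪a x, y - x⟫ ≤ A y)
    (hE : ∀ x ∈ E, ∀ y, A y ≤ A x + ⟪a x, y - x⟫ + κ / 2 * ‖y - x‖ ^ 2) :
    μ {x | x ∈ E ∧ ¬ ∃ S, SecondOrder A (a x) x S} = 0 := by
  have lip : ∀ z, ∀ x ∈ E, ‖a z - a x‖ ≤ 2 * κ * ‖z - x‖ := fun z x hx =>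
    subgrad_lip hκ (ha z) (hE x hx) (ha x z)
  have lipOn : LipschitzOnWith (2 * κ).toNNReal a E := by
    refine LipschitzOnWith.of_dist_le_mul fun z _ x hx => ?_
    rw [dist_eq_norm, dist_eq_norm, Real.coe_toNNReal _ (by positivity)]
    exact lip z x hx
  obtain ⟨G, hG, hGa⟩ := lipOn.extend_finite_dimension
  have hdiff : ∀ᵐ x ∂μ, DifferentiableAt ℝ G x := hG.ae_differentiableAt
  have hdens := Besicovitch.ae_tendsto_measure_inter_div μ E
  have hn1 : μ {x | ¬ DifferentiableAt ℝ G x} = 0 := hdiff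
  have hn2 : μ ({x | ¬ Tendsto (fun r => μ (E ∩ closedBall x r) / μ (closedBall x r))
      (𝓝[>] 0) (𝓝 1)} ∩ E) = 0 :=
    le_antisymm ((Measure.le_restrict_apply _ _).trans_eq hdens) (zero_le)
  refine measure_mono_null (t := _ ∪ _) ?_ (measure_union_null hn1 hn2)
  rintro x ⟨hxE, hx⟩
  by_contra hbad
  simp only [mem_union, mem_ofPred_eq, mem_inter_iff, not_or, not_not, not_and] at hbad
  obtain ⟨hxd, hxt⟩ := hbad
  have hxt : Tendsto (fun r => μ (E ∩ closedBall x r) / μ (closedBall x r)) (𝓝[>] 0) (𝓝 1) := by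
    by_contra h; exact hxt h hxE
  apply hx
  set S := fderiv ℝ G x with hS
  refine ⟨S, fun ε hε => ?_⟩
  -- The subgradient selection is differentiable at the density point `x`, not only along `E`:
  -- every nearby `z` has a point of `E` at distance `o(‖z - x‖)`.
  have step : ∀ᶠ z in 𝓝 x, ‖a z - a x - S (z - x)‖ ≤ ε * ‖z - x‖ := by
    set M := 2 * κ + ‖S‖ with hM
    have hMpos : 0 < M := by positivity
    set δ := min 1 (ε / (2 * M)) with hδ
    have hδpos : 0 < δ := by positivity
    have hδM : M * δ ≤ ε / 2 := by
      calc M * δ ≤ M * (ε / (2 * M)) := mul_le_mul_of_nonneg_left (min_le_right _ _) hMpos.le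
        _ = ε / 2 := by field_simp
    have e1 := density_near μ hxE hxt hδpos (min_le_left _ _)
    have e2 := hxd.hasFDerivAt.isLittleO.def (c := ε / 4) (by positivity)
    rw [Metric.eventually_nhds_iff] at e2
    obtain ⟨ρ, hρ, e2⟩ := e2
    have e3 : ∀ᶠ z in 𝓝 x, ‖z - x‖ < ρ / 2 := by
      rw [Metric.eventually_nhds_iff]
      exact ⟨ρ / 2, by positivity, fun z hz => by rwa [dist_eq_norm] at hz⟩
    filter_upwards [e1, e3] with z ⟨z', hz', hzz⟩ hz3
    have hzz1 : ‖z - z'‖ ≤ ‖z - x‖ :=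
      hzz.trans (mul_le_of_le_one_left (norm_nonneg _) (min_le_left _ _))
    have hz'x : ‖z' - x‖ ≤ 2 * ‖z - x‖ := by
      have : z' - x = (z - x) - (z - z') := by abel
      rw [this]; linarith [norm_sub_le (z - x) (z - z')]
    have h2 := e2 (y := z') (by rw [dist_eq_norm]; linarith)
    rw [← hGa hz', ← hGa hxE, ← hS] at h2
    have h1 := lip z z' hz'
    have h3 : a z - a x - S (z - x) = (a z - a z') + (a z' - a x - S (z' - x)) - S (z - z') := by
      have : z - x = (z - z') + (z' - x) := by abel
      rw [this, map_add]; abel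
    rw [h3]
    have h4 := S.le_opNorm (z - z')
    calc _ ≤ ‖a z - a z'‖ + ‖a z' - a x - S (z' - x)‖ + ‖S (z - z')‖ :=
          (norm_sub_le _ _).trans (by gcongr; exact norm_add_le _ _)
      _ ≤ 2 * κ * ‖z - z'‖ + ε / 4 * (2 * ‖z - x‖) + ‖S‖ * ‖z - z'‖ := by
          refine add_le_add (add_le_add h1 (h2.trans ?_)) h4
          gcongr
      _ = M * ‖z - z'‖ + ε / 2 * ‖z - x‖ := by rw [hM]; ring
      _ ≤ M * (δ * ‖z - x‖) + ε / 2 * ‖z - x‖ := by gcongr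
      _ = (M * δ + ε / 2) * ‖z - x‖ := by ring
      _ ≤ ε * ‖z - x‖ := by gcongr; linarith
  -- Integrating the subgradients along the segment from `x` to `y` gives the expansion of `A`.
  rw [Metric.eventually_nhds_iff] at step ⊢
  obtain ⟨ρ, hρ, step⟩ := step
  refine ⟨ρ, hρ, fun y hy => ?_⟩
  rw [dist_eq_norm] at hy
  set v := y - x with hv
  have key := one_dim_taylor (g := fun t => A (x + t • v)) (σ := fun t => ⟪a (x + t • v), v⟫)
    (α := ⟪a x, v⟫) (β := ⟪S v, v⟫) (ε := ε * ‖v‖ ^ 2) ?_ ?_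
  · simpa [hv] using key
  · intro t _ t' _
    have := ha (x + t • v) (x + t' • v)
    have e : x + t' • v - (x + t • v) = (t' - t) • v := by rw [sub_smul]; abel
    rw [e, inner_smul_right] at this
    linarith
  · intro t ht
    have h1 := step (y := x + t • v) (by
      rw [dist_eq_norm, add_sub_cancel_left, norm_smul, Real.norm_of_nonneg ht.1]
      exact (mul_le_of_le_one_left (norm_nonneg _) ht.2).trans_lt hy)
    rw [add_sub_cancel_left, norm_smul, Real.norm_of_nonneg ht.1] at h1
    have h2 : ⟪a (x + t • v), v⟫ - ⟪a x, v⟫ - ⟪S v, v⟫ * t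
        = ⟪a (x + t • v) - a x - S (t • v), v⟫ := by
      rw [map_smul, inner_sub_left, inner_sub_left, inner_smul_left]; simp; ring
    rw [h2]
    refine (abs_real_inner_le_norm _ _).trans ?_
    calc _ ≤ ε * (t * ‖v‖) * ‖v‖ := by gcongr
      _ ≤ ε * (1 * ‖v‖) * ‖v‖ := by gcongr; exact ht.2
      _ = _ := by ring

/-- Jensen's lemma combined with Alexandrov's theorem: if `A + B - κ/2 ‖·‖² - ⟪q, ·⟫` attains
its maximum for every `q`, then for arbitrarily small `q` it does so at a point where both
convex functions `A` and `B` have second-order expansions. -/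
theorem jensen_alexandrov {d : ℕ} {A B : Eucl d → ℝ} {a b : Eucl d → Eucl d}
    (ha : ∀ x y, A x + ⟪a x, y - x⟫ ≤ A y) (hb : ∀ x y, B x + ⟪b x, y - x⟫ ≤ B y)
    {κ : ℝ} (hκ : 0 < κ)
    (hmax : ∀ q : Eucl d, ∃ x, ∀ y, A y + B y - κ / 2 * ‖y‖ ^ 2 - ⟪q, y⟫
      ≤ A x + B x - κ / 2 * ‖x‖ ^ 2 - ⟪q, x⟫) {r : ℝ} (hr : 0 < r) :
    ∃ x q : Eucl d, ‖q‖ < r ∧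
      (∀ y, A y + B y - κ / 2 * ‖y‖ ^ 2 - ⟪q, y⟫
        ≤ A x + B x - κ / 2 * ‖x‖ ^ 2 - ⟪q, x⟫) ∧
      a x + b x = κ • x + q ∧
      ∃ SA SB : Eucl d →L[ℝ] Eucl d, SecondOrder A (a x) x SA ∧ SecondOrder B (b x) x SB ∧
        ∀ w, ⟪SA w, w⟫ + ⟪SB w, w⟫ ≤ κ * ‖w‖ ^ 2 := by
  set μ : Measure (Eucl d) := μH[Module.finrank ℝ (Eucl d)] with hμ
  have : μ.IsAddHaarMeasure := isAddHaarMeasure_hausdorffMeasure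
  set f := fun x => A x + B x with hf
  have hfab : ∀ x y, f x + ⟪a x + b x, y - x⟫ ≤ f y := fun x y => by
    rw [inner_add_left]; simp only [hf]; linarith [ha x y, hb x y]
  have up : ∀ q x : Eucl d, (∀ y, A y + B y - κ / 2 * ‖y‖ ^ 2 - ⟪q, y⟫
      ≤ A x + B x - κ / 2 * ‖x‖ ^ 2 - ⟪q, x⟫) →
      ∀ y, f y ≤ f x + ⟪κ • x + q, y - x⟫ + κ / 2 * ‖y - x‖ ^ 2 := by
    intro q x h y
    have h1 := h y
    have h2 : ‖y - x‖ ^ 2 = ‖y‖ ^ 2 - 2 * ⟪y, x⟫ + ‖x‖ ^ 2 := norm_sub_sq_real y x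
    have h3 : ⟪κ • x + q, y - x⟫ = κ * ⟪y, x⟫ - κ * ‖x‖ ^ 2 + ⟪q, y⟫ - ⟪q, x⟫ := by
      rw [inner_add_left, inner_sub_right, inner_sub_right, real_inner_smul_left,
        real_inner_smul_left, real_inner_self_eq_norm_sq, real_inner_comm]; ring
    rw [h2, h3]; simp only [hf]; linarith
  have grad : ∀ q x : Eucl d, (∀ y, A y + B y - κ / 2 * ‖y‖ ^ 2 - ⟪q, y⟫
      ≤ A x + B x - κ / 2 * ‖x‖ ^ 2 - ⟪q, x⟫) → a x + b x = κ • x + q := by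
    intro q x h
    have := subgrad_lip hκ (hfab x) (up q x h) (by simp)
    simp only [sub_self, norm_zero, mul_zero] at this
    exact sub_eq_zero.1 (norm_le_zero_iff.1 this)
  set E : Set (Eucl d) := {x | ∃ q : Eucl d, ∀ y, A y + B y - κ / 2 * ‖y‖ ^ 2 - ⟪q, y⟫
      ≤ A x + B x - κ / 2 * ‖x‖ ^ 2 - ⟪q, x⟫} with hE
  have upf : ∀ x ∈ E, ∀ y, f y ≤ f x + ⟪a x + b x, y - x⟫ + κ / 2 * ‖y - x‖ ^ 2 := by
    rintro x ⟨q, hq⟩ y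
    rw [grad q x hq]; exact up q x hq y
  have upA : ∀ x ∈ E, ∀ y, A y ≤ A x + ⟪a x, y - x⟫ + κ / 2 * ‖y - x‖ ^ 2 := by
    intro x hx y
    have h1 := upf x hx y
    rw [inner_add_left] at h1
    simp only [hf] at h1
    linarith [hb x y]
  have upB : ∀ x ∈ E, ∀ y, B y ≤ B x + ⟪b x, y - x⟫ + κ / 2 * ‖y - x‖ ^ 2 := by
    intro x hx y
    have h1 := upf x hx y
    rw [inner_add_left] at h1
    simp only [hf] at h1
    linarith [ha x y]
  have nA := second_order_ae μ hκ ha upA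
  have nB := second_order_ae μ hκ hb upB
  set N := {x | x ∈ E ∧ ¬ ∃ S, SecondOrder A (a x) x S} ∪
    {x | x ∈ E ∧ ¬ ∃ S, SecondOrder B (b x) x S} with hN
  have hN0 : μ N = 0 := measure_union_null nA nB
  have hNE : N ⊆ E := by rintro x (h | h) <;> exact h.1
  -- `Q` sends a contact point to its slope `q`. It is Lipschitz on contact points, so the slopes
  -- attained at points without an expansion form a null set and cannot fill the ball of radius `r`.
  set Q : Eucl d → Eucl d := fun x => a x + b x - κ • x with hQ
  have lipQ : LipschitzOnWith (3 * κ).toNNReal Q N := by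
    refine LipschitzOnWith.of_dist_le_mul fun z hz x hx => ?_
    rw [dist_eq_norm, dist_eq_norm, Real.coe_toNNReal _ (by positivity)]
    have h1 := subgrad_lip hκ (hfab z) (upf x (hNE hx)) (hfab x z)
    have h2 : Q z - Q x = (a z + b z - (a x + b x)) - κ • (z - x) := by
      simp only [hQ, smul_sub]; abel
    rw [h2]
    refine (norm_sub_le _ _).trans ?_
    rw [norm_smul, Real.norm_of_nonneg hκ.le]; linarith
  have hQN : μ (Q '' N) = 0 := by
    have := lipQ.hausdorffMeasure_image_le (d := (Module.finrank ℝ (Eucl d) : ℝ)) (by positivity)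
    rw [← hμ, hN0, mul_zero] at this
    exact le_antisymm this zero_le
  have hball : ¬ ball (0 : Eucl d) r ⊆ Q '' N := fun h =>
    (measure_ball_pos μ (0 : Eucl d) hr).ne' (measure_mono_null h hQN)
  obtain ⟨q, hq, hqN⟩ := not_subset.1 hball
  obtain ⟨x, hx⟩ := hmax q
  have hxE : x ∈ E := ⟨q, hx⟩
  have hab := grad q x hx
  have hxN : x ∉ N := fun h => hqN ⟨x, h, by simp only [hQ, hab]; abel⟩
  simp only [hN, mem_union, mem_ofPred_eq, not_or, not_and, not_not] at hxN
  obtain ⟨SA, hSA⟩ := hxN.1 hxE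
  obtain ⟨SB, hSB⟩ := hxN.2 hxE
  refine ⟨x, q, by simpa using hq, hx, hab, SA, SB, hSA, hSB, fun w => ?_⟩
  -- Compare the expansion of `A + B` along `x + t • w` with the touching paraboloid.
  refine le_of_forall_pos_le_add fun ε hε => ?_
  set ε' := ε / (4 * (‖w‖ ^ 2 + 1)) with hε'
  have hε'pos : 0 < ε' := by positivity
  have hcont : Tendsto (fun t : ℝ => x + t • w) (𝓝[>] 0) (𝓝 x) := by
    have : Continuous fun t : ℝ => x + t • w := by fun_prop
    have h := this.tendsto 0
    simp only [zero_smul, add_zero] at h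
    exact h.mono_left nhdsWithin_le_nhds
  obtain ⟨t, ⟨h1, h2⟩, ht⟩ := (((hcont.eventually (hSA ε' hε'pos)).and
    (hcont.eventually (hSB ε' hε'pos))).and self_mem_nhdsWithin).exists
  have ht : 0 < t := ht
  have h3 := upf x hxE (x + t • w)
  rw [add_sub_cancel_left] at h1 h2 h3
  rw [inner_add_left] at h3
  simp only [hf] at h3
  have hn : ‖t • w‖ ^ 2 = t ^ 2 * ‖w‖ ^ 2 := by rw [norm_smul, mul_pow]; simp
  rw [hn] at h1 h2 h3
  simp only [map_smul, inner_smul_right, real_inner_smul_left] at h1 h2 h3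
  have h1 := (abs_le.1 h1).1
  have h2 := (abs_le.1 h2).1
  have h4 : t ^ 2 * (⟪SA w, w⟫ + ⟪SB w, w⟫) ≤ t ^ 2 * (κ * ‖w‖ ^ 2 + 4 * ε' * ‖w‖ ^ 2) := by
    nlinarith
  have h5 := le_of_mul_le_mul_left h4 (by positivity)
  have h6 : 4 * ε' * ‖w‖ ^ 2 ≤ ε := by
    have : ε = 4 * ε' * (‖w‖ ^ 2 + 1) := by rw [hε']; field_simp
    nlinarith
  linarith

/-! ### Second-order jets and the comparison principle -/

/-- Subsolution property tested with quadratic polynomials only (second-order superjets). -/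
def JetSub {d : ℕ} (D : Set (Eucl d)) (G : Matrix (Fin d) (Fin d) ℝ → Eucl d → ℝ → Eucl d → ℝ)
    (g u : Eucl d → ℝ) : Prop :=
  ∀ x₀ ∈ D, ∀ (p : Eucl d) (X : Matrix (Fin d) (Fin d) ℝ), X.IsSymm →
    (∀ᶠ x in 𝓝 x₀, u x ≤ u x₀ + ⟪p, x - x₀⟫ + quadForm X (x - x₀) / 2) →
    G X p (u x₀) x₀ ≤ g x₀

/-- Supersolution property tested with quadratic polynomials only (second-order subjets). -/
def JetSup {d : ℕ} (D : Set (Eucl d)) (G : Matrix (Fin d) (Fin d) ℝ → Eucl d → ℝ → Eucl d → ℝ)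
    (g u : Eucl d → ℝ) : Prop :=
  ∀ x₀ ∈ D, ∀ (p : Eucl d) (X : Matrix (Fin d) (Fin d) ℝ), X.IsSymm →
    (∀ᶠ x in 𝓝 x₀, u x₀ + ⟪p, x - x₀⟫ + quadForm X (x - x₀) / 2 ≤ u x) →
    g x₀ ≤ G X p (u x₀) x₀

lemma exists_symm_matrix {d : ℕ} (S : Eucl d →L[ℝ] Eucl d) :
    ∃ X : Matrix (Fin d) (Fin d) ℝ, X.IsSymm ∧ ∀ w, quadForm X w = ⟪S w, w⟫ := by
  refine ⟨Matrix.of fun i j => ((S (EuclideanSpace.single j 1)) i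
    + (S (EuclideanSpace.single i 1)) j) / 2, ?_, fun w => ?_⟩
  · ext i j; simp [add_comm]
  · have hw : w = ∑ j, w j • EuclideanSpace.single j (1:ℝ) := by
      ext k; simp [Finset.sum_apply, Pi.single_apply]
    have h1 : ∀ i, (S w) i = ∑ j, w j * (S (EuclideanSpace.single j 1)) i := by
      intro i
      conv_lhs => rw [hw]
      simp [map_sum]
    have h2 : ⟪S w, w⟫ = ∑ i, ∑ j, (S (EuclideanSpace.single j 1)) i * w i * w j := by
      rw [PiLp.inner_apply]
      refine Finset.sum_congr rfl fun i _ => ?_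
      simp only [h1]
      simp [Finset.mul_sum]
      refine Finset.sum_congr rfl fun j _ => by ring
    have h3 : ⟪S w, w⟫ = ∑ i, ∑ j, (S (EuclideanSpace.single i 1)) j * w i * w j := by
      rw [h2, Finset.sum_comm]
      refine Finset.sum_congr rfl fun i _ => Finset.sum_congr rfl fun j _ => by ring
    have : ⟪S w, w⟫ = (⟪S w, w⟫ + ⟪S w, w⟫) / 2 := by ring
    rw [this]
    nth_rw 1 [h2]
    rw [h3, ← Finset.sum_add_distrib, Finset.sum_div, quadForm]
    refine Finset.sum_congr rfl fun i _ => ?_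
    rw [← Finset.sum_add_distrib, Finset.sum_div]
    refine Finset.sum_congr rfl fun j _ => ?_
    simp only [Matrix.of_apply]; ring

/-- The sup-convolution of `w`, normalised to a convex function `A` by adding
`‖x‖² / (2η)`; the maximiser `Y x` divided by `η` is a subgradient of `A` at `x`. -/
lemma exists_supconv {d : ℕ} {K : Set (Eucl d)} (hK : IsCompact K) (hne : K.Nonempty)
    {w : Eucl d → ℝ} (hw : ContinuousOn w K) (η : ℝ) :
    ∃ (A : Eucl d → ℝ) (Y : Eucl d → Eucl d), (∀ x, Y x ∈ K) ∧
      (∀ x, A x = w (Y x) + ⟪x, Y x⟫ / η - ‖Y x‖ ^ 2 / (2 * η)) ∧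
      (∀ x, ∀ y ∈ K, w y + ⟪x, y⟫ / η - ‖y‖ ^ 2 / (2 * η) ≤ A x) ∧
      ∀ x y, A x + ⟪(1 / η) • Y x, y - x⟫ ≤ A y := by
  have h : ∀ x : Eucl d, ∃ y ∈ K, ∀ y' ∈ K, w y' + ⟪x, y'⟫ / η - ‖y'‖ ^ 2 / (2 * η)
      ≤ w y + ⟪x, y⟫ / η - ‖y‖ ^ 2 / (2 * η) := by
    intro x
    have hc : ContinuousOn (fun y => w y + ⟪x, y⟫ / η - ‖y‖ ^ 2 / (2 * η)) K := by
      have : ContinuousOn (fun y : Eucl d => ⟪x, y⟫ / η - ‖y‖ ^ 2 / (2 * η)) K := by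
        apply Continuous.continuousOn; fun_prop
      simp only [add_sub_assoc]
      exact hw.add this
    obtain ⟨y, hy, hmax⟩ := hK.exists_isMaxOn hne hc
    exact ⟨y, hy, fun y' hy' => hmax hy'⟩
  choose Y hY hmax using h
  refine ⟨_, Y, hY, fun x => rfl, hmax, fun x y => ?_⟩
  have := hmax y (Y x) (hY x)
  have e : ⟪(1 / η) • Y x, y - x⟫ = ⟪y, Y x⟫ / η - ⟪x, Y x⟫ / η := by
    rw [real_inner_smul_left, inner_sub_right, real_inner_comm, real_inner_comm x]; ring
  rw [e]; linarith

/-- Completing the square in `x`: at fixed `y, z`, the doubled quadratic with slope `q` is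
greatest at the midpoint of `y` and `z` shifted by `-(η / 2) q`. -/
lemma quad_identity {V : Type*} [NormedAddCommGroup V] [InnerProductSpace ℝ V]
    (x Y Z q : V) {η : ℝ} (hη : 0 < η) :
    (⟪x, Y⟫ / η - ‖Y‖ ^ 2 / (2 * η)) + (⟪x, Z⟫ / η - ‖Z‖ ^ 2 / (2 * η))
      - (2 / η) / 2 * ‖x‖ ^ 2 - ⟪q, x⟫
    = -‖Y - Z‖ ^ 2 / (4 * η) - ⟪q, Y + Z⟫ / 2 + η / 4 * ‖q‖ ^ 2
      - (1 / η) * ‖x - ((1 / 2 : ℝ) • (Y + Z) - (η / 2) • q)‖ ^ 2 := by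
  have c1 := real_inner_comm x Y
  have c2 := real_inner_comm x Z
  have c3 := real_inner_comm x q
  have c4 := real_inner_comm Y Z
  have c5 := real_inner_comm Y q
  have c6 := real_inner_comm Z q
  simp only [← real_inner_self_eq_norm_sq, inner_sub_left, inner_sub_right, inner_add_left,
    inner_add_right, real_inner_smul_left, real_inner_smul_right, c1, c2, c3, c4, c5, c6]
  field_simp
  ring

lemma quad_identity' {V : Type*} [NormedAddCommGroup V] [InnerProductSpace ℝ V]
    (x Y Z : V) {η : ℝ} (hη : 0 < η) :
    (⟪x, Y⟫ / η - ‖Y‖ ^ 2 / (2 * η)) + (⟪x, Z⟫ / η - ‖Z‖ ^ 2 / (2 * η))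
      - (2 / η) / 2 * ‖x‖ ^ 2 = -(‖x - Y‖ ^ 2 + ‖x - Z‖ ^ 2) / (2 * η) := by
  rw [norm_sub_sq_real, norm_sub_sq_real]
  field_simp
  ring

/-- Test quadratics for `w` from the expansion of its sup-convolution `A`: the translate of
the expansion touches `w` from above at the maximiser `y₀`. -/
lemma jet_of_supconv {d : ℕ} {D : Set (Eucl d)} (hD : IsOpen D) {w A : Eucl d → ℝ} {η : ℝ}
    (hη : 0 < η) {x y₀ : Eucl d} (hy₀ : y₀ ∈ D)
    (hA : A x = w y₀ + ⟪x, y₀⟫ / η - ‖y₀‖ ^ 2 / (2 * η))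
    (hle : ∀ x, ∀ y ∈ D, w y + ⟪x, y⟫ / η - ‖y‖ ^ 2 / (2 * η) ≤ A x)
    {S : Eucl d →L[ℝ] Eucl d} (hS : SecondOrder A ((1 / η) • y₀) x S) {ε : ℝ} (hε : 0 < ε) :
    ∀ᶠ y in 𝓝 y₀, w y ≤ w y₀ + ⟪(1 / η) • (y₀ - x), y - y₀⟫
      + (⟪S (y - y₀), y - y₀⟫ + (2 * ε - 1 / η) * ‖y - y₀‖ ^ 2) / 2 := by
  have hc : Tendsto (fun y => x + (y - y₀)) (𝓝 y₀) (𝓝 x) := by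
    have : Continuous fun y : Eucl d => x + (y - y₀) := by fun_prop
    simpa using this.tendsto y₀
  filter_upwards [hc.eventually (hS ε hε), hD.mem_nhds hy₀] with y h1 hy
  have h2 := hle (x + (y - y₀)) y hy
  rw [add_sub_cancel_left] at h1
  have h1 := (abs_le.1 h1).2
  set v := y - y₀ with hv
  have hyv : y = y₀ + v := by rw [hv]; abel
  have e : ⟪(1 / η) • y₀, v⟫ + ⟪x, y₀⟫ / η - ‖y₀‖ ^ 2 / (2 * η) - ⟪x + v, y⟫ / η
      + ‖y‖ ^ 2 / (2 * η) = ⟪(1 / η) • (y₀ - x), v⟫ - (1 / η) * ‖v‖ ^ 2 / 2 := by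
    rw [hyv, norm_add_sq_real, real_inner_smul_left, real_inner_smul_left, inner_sub_left,
      inner_add_left, inner_add_right, inner_add_right, real_inner_self_eq_norm_sq,
      real_inner_comm y₀ v]
    field_simp
    ring
  linarith

lemma quadForm_add_scalar {d : ℕ} (S : Eucl d →L[ℝ] Eucl d) (c : ℝ) :
    ∃ X : Matrix (Fin d) (Fin d) ℝ, X.IsSymm ∧ ∀ w, quadForm X w = ⟪S w, w⟫ + c * ‖w‖ ^ 2 := by
  obtain ⟨X, hX, h⟩ := exists_symm_matrix (S + c • ContinuousLinearMap.id ℝ (Eucl d))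
  refine ⟨X, hX, fun w => ?_⟩
  rw [h]
  simp [inner_add_left, real_inner_smul_left]

set_option maxHeartbeats 1000000 in
/-- Comparison principle.  The two operators are compared through `hG`, which holds without any
bound on the matrices; the maximum of `u - v` is then controlled by the boundary values and by
the difference of the right-hand sides.  Sup- and inf-convolutions of `u` and `v` with the same
parameter `η` double the variables, and `jensen_alexandrov` supplies the jets. -/
theorem comparison {d : ℕ} {D : Set (Eucl d)} (hD : IsOpen D) (hDb : Bornology.IsBounded D)
    {G₁ G₂ : Matrix (Fin d) (Fin d) ℝ → Eucl d → ℝ → Eucl d → ℝ} {f g u v : Eucl d → ℝ}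
    {h e c m m' : ℝ} {σ : ℝ → ℝ} (hh : 0 < h) (hσ : Tendsto σ (𝓝 0) (𝓝 0))
    (hG : ∀ X Y : Matrix (Fin d) (Fin d) ℝ, X.IsSymm → Y.IsSymm →
      ∀ (p q : Eucl d) (r s δ : ℝ), 0 < δ →
      (∀ w, quadForm X w ≤ quadForm Y w + δ * ‖w‖ ^ 2) → ‖p - q‖ ≤ δ → s ≤ r →
      ∀ x ∈ D, ∀ y ∈ D, G₂ Y q s y ≤ G₁ X p r x + e + σ ‖x - y‖ + c * δ)
    (hu : ContinuousOn u (closure D)) (hv : ContinuousOn v (closure D))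
    (hg : ContinuousOn g (closure D))
    (hsub : JetSub D (fun M P r x => G₁ M P r x + r / h) (fun x => f x / h) u)
    (hsup : JetSup D (fun M P r x => G₂ M P r x + r / h) (fun x => g x / h) v)
    (hm : 0 ≤ m) (hbd : ∀ x ∈ frontier D, u x - v x ≤ m)
    (hfg : ∀ x ∈ D, f x - g x ≤ m') :
    ∀ x ∈ closure D, u x - v x ≤ max m (m' + h * e) := by
  intro x₀ hx₀
  by_contra! hcon
  set S := u x₀ - v x₀ with hS
  set τ := S - max m (m' + h * e) with hτ
  have hτpos : 0 < τ := by linarith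
  have hSm : m + τ ≤ S := by linarith [le_max_left m (m' + h * e)]
  have hSm' : m' + h * e + τ ≤ S := by linarith [le_max_right m (m' + h * e)]
  have hK : IsCompact (closure D) := hDb.isCompact_closure
  have hne : (closure D).Nonempty := ⟨x₀, hx₀⟩
  obtain ⟨R₀, hR₀pos, hR₀⟩ := hK.isBounded.exists_pos_norm_le
  obtain ⟨Mu, hMu⟩ := hK.exists_bound_of_continuousOn hu
  obtain ⟨Mv, hMv⟩ := hK.exists_bound_of_continuousOn hv
  have unif : ∀ {φ : Eucl d → ℝ}, ContinuousOn φ (closure D) → ∃ ρ > 0, ∀ x ∈ closure D,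
      ∀ y ∈ closure D, ‖x - y‖ < ρ → |φ x - φ y| < τ / 8 := by
    intro φ hφ
    have h1 := hK.uniformContinuousOn_of_continuous hφ
    rw [Metric.uniformContinuousOn_iff] at h1
    obtain ⟨ρ, hρ, h2⟩ := h1 (τ / 8) (by positivity)
    refine ⟨ρ, hρ, fun x hx y hy hxy => ?_⟩
    have := h2 x hx y hy (by rwa [dist_eq_norm])
    rwa [Real.dist_eq] at this
  obtain ⟨ρu, hρu, uu⟩ := unif hu
  obtain ⟨ρv, hρv, uv⟩ := unif hv
  obtain ⟨ρg, hρg, ug⟩ := unif hg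
  have hσ' : ∀ᶠ s in 𝓝 (0:ℝ), σ s < τ / (8 * h) := hσ.eventually (gt_mem_nhds (by positivity))
  rw [Metric.eventually_nhds_iff] at hσ'
  obtain ⟨ρσ, hρσ, hσ'⟩ := hσ'
  set ρ := min (min ρu ρv) (min ρg ρσ) with hρ
  have hρpos : 0 < ρ := by positivity
  -- Smallness of `η` forces the two contact points within `ρ` of each other; `r` bounds the slope
  -- of the Jensen perturbation, which costs `τ/4` in the value and `τ/8` in the equations.
  set Cst := |Mu + Mv - S + τ| with hCst
  set η := min 1 (ρ ^ 2 / (8 * (Cst + 1))) with hη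
  have hηpos : 0 < η := by positivity
  have hη1 : η ≤ 1 := min_le_left _ _
  have hηρ : 4 * η * Cst < ρ ^ 2 := by
    have h1 : η * (8 * (Cst + 1)) ≤ ρ ^ 2 := by
      rw [← le_div_iff₀ (by positivity)]; exact min_le_right _ _
    have : 0 ≤ η * Cst := by positivity
    nlinarith
  set r := min 1 (min (τ / (4 * (2 * R₀ + 1))) (τ / (32 * h * (|c| + 1)))) with hr
  have hrpos : 0 < r := by positivity
  have hr1 : r ≤ 1 := min_le_left _ _
  have hr2 : r * (2 * R₀ + 1) ≤ τ / 4 := by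
    have : r ≤ τ / (4 * (2 * R₀ + 1)) := (min_le_right _ _).trans (min_le_left _ _)
    rw [le_div_iff₀ (by positivity)] at this; linarith
  have hr3 : h * (c * (4 * r)) ≤ τ / 8 := by
    have h1 : r ≤ τ / (32 * h * (|c| + 1)) := (min_le_right _ _).trans (min_le_right _ _)
    rw [le_div_iff₀ (by positivity)] at h1
    have h2 : h * r * c ≤ h * r * (|c| + 1) :=
      mul_le_mul_of_nonneg_left (by linarith [le_abs_self c]) (by positivity)
    linarith
  -- Maximising `A + B - ‖·‖²/η - ⟪q, ·⟫` amounts to maximising, over pairs `(y, z)`, the doubled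
  -- functional `u y - v z - ‖y - z‖²/(4η) - ⟪q, y + z⟫/2`, which is continuous on a compact set.
  obtain ⟨A, Y, hY, hA, hAle, hAsub⟩ := exists_supconv hK hne hu η
  obtain ⟨B, Z, hZ, hB, hBle, hBsub⟩ := exists_supconv hK hne hv.neg η
  have hmax : ∀ q : Eucl d, ∃ x, ∀ y, A y + B y - (2 / η) / 2 * ‖y‖ ^ 2 - ⟪q, y⟫
      ≤ A x + B x - (2 / η) / 2 * ‖x‖ ^ 2 - ⟪q, x⟫ := by
    intro q
    have hcont : ContinuousOn (fun p : Eucl d × Eucl d => u p.1 + (-v) p.2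
        + (-‖p.1 - p.2‖ ^ 2 / (4 * η) - ⟪q, p.1 + p.2⟫ / 2)) (closure D ×ˢ closure D) := by
      have c1 : ContinuousOn (fun p : Eucl d × Eucl d => u p.1) (closure D ×ˢ closure D) :=
        hu.comp continuousOn_fst fun p hp => hp.1
      have c2 : ContinuousOn (fun p : Eucl d × Eucl d => (-v) p.2) (closure D ×ˢ closure D) :=
        hv.neg.comp continuousOn_snd fun p hp => hp.2
      refine (c1.add c2).add (Continuous.continuousOn ?_)
      fun_prop
    obtain ⟨⟨y, z⟩, ⟨hy, hz⟩, hyz⟩ := (hK.prod hK).exists_isMaxOn (hne.prod hne) hcont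
    refine ⟨(1 / 2 : ℝ) • (y + z) - (η / 2) • q, fun x' => ?_⟩
    have i1 := quad_identity x' (Y x') (Z x') q hηpos
    have i2 := quad_identity ((1 / 2 : ℝ) • (y + z) - (η / 2) • q) y z q hηpos
    have i3 : u (Y x') + (-v) (Z x') + (-‖Y x' - Z x'‖ ^ 2 / (4 * η) - ⟪q, Y x' + Z x'⟫ / 2)
        ≤ u y + (-v) z + (-‖y - z‖ ^ 2 / (4 * η) - ⟪q, y + z⟫ / 2) :=
      hyz (show (Y x', Z x') ∈ closure D ×ˢ closure D from ⟨hY x', hZ x'⟩)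
    have i4 := hAle ((1 / 2 : ℝ) • (y + z) - (η / 2) • q) y hy
    have i5 := hBle ((1 / 2 : ℝ) • (y + z) - (η / 2) • q) z hz
    have i6 : 0 ≤ (1 / η) * ‖x' - ((1 / 2 : ℝ) • (Y x' + Z x') - (η / 2) • q)‖ ^ 2 := by
      positivity
    rw [sub_self, norm_zero] at i2
    rw [hA x', hB x']
    linarith
  obtain ⟨x, q, hqr, hxmax, hab, SA, SB, hSA, hSB, hSAB⟩ :=
    jensen_alexandrov hAsub hBsub (κ := 2 / η) (by positivity) hmax hrpos
  set y' := Y x with hy'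
  set z' := Z x with hz'
  have hy'K : y' ∈ closure D := hY x
  have hz'K : z' ∈ closure D := hZ x
  have hpq : (1 / η) • (y' - x) + (1 / η) • (z' - x) = q := by
    have : (1 / η) • (y' - x) + (1 / η) • (z' - x)
        = ((1 / η) • y' + (1 / η) • z') - (2 / η) • x := by
      simp only [smul_sub]
      have : (2 / η) • x = (1 / η) • x + (1 / η) • x := by rw [← add_smul]; ring_nf
      rw [this]; abel
    rw [this, hab]; abel
  have hxeq : x = (1 / 2 : ℝ) • (y' + z') - (η / 2) • q := by
    rw [← hpq, ← smul_add, smul_smul]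
    have : η / 2 * (1 / η) = (1 / 2 : ℝ) := by field_simp
    rw [this, ← smul_sub]
    have : y' + z' - (y' - x + (z' - x)) = (2 : ℝ) • x := by rw [two_smul]; abel
    rw [this, smul_smul]; norm_num
  have hxnorm : ‖x‖ ≤ R₀ + 1 := by
    rw [hxeq]
    refine (norm_sub_le _ _).trans ?_
    rw [norm_smul, norm_smul, Real.norm_of_nonneg (by norm_num), Real.norm_of_nonneg (by positivity)]
    have h1 := norm_add_le y' z'
    have h2 := hR₀ y' hy'K
    have h3 := hR₀ z' hz'K
    have h4 : η / 2 * ‖q‖ ≤ 1 * 1 :=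
      mul_le_mul (by linarith) (by linarith) (norm_nonneg _) (by norm_num)
    linarith
  -- The maximum over pairs is at least the diagonal value at `x₀`, up to the perturbation; hence
  -- the value of `u - v` there exceeds the boundary bound and both contact points are interior.
  have hW : A x + B x - (2 / η) / 2 * ‖x‖ ^ 2
      = u y' - v z' - (‖x - y'‖ ^ 2 + ‖x - z'‖ ^ 2) / (2 * η) := by
    have := quad_identity' x y' z' hηpos
    rw [hA x, hB x, ← hy', ← hz']
    simp only [Pi.neg_apply]
    rw [neg_div] at this
    linarith
  have hW0 : S - τ / 4 ≤ A x + B x - (2 / η) / 2 * ‖x‖ ^ 2 := by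
    have h1 := hxmax x₀
    have h2 := hAle x₀ x₀ hx₀
    have h3 := hBle x₀ x₀ hx₀
    have h4 := quad_identity' x₀ x₀ x₀ hηpos
    simp only [sub_self, norm_zero, Pi.neg_apply] at h3 h4
    norm_num at h4
    rw [real_inner_self_eq_norm_sq] at h2 h3
    have h5 : |⟪q, x - x₀⟫| ≤ r * (2 * R₀ + 1) := by
      refine (abs_real_inner_le_norm _ _).trans ?_
      refine mul_le_mul hqr.le ?_ (norm_nonneg _) hrpos.le
      linarith [norm_sub_le x x₀, hR₀ x₀ hx₀]
    have h6 := (abs_le.1 h5).1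
    rw [inner_sub_right] at h6
    linarith
  have hval : S - τ / 4 ≤ u y' - v z' := by
    have : 0 ≤ (‖x - y'‖ ^ 2 + ‖x - z'‖ ^ 2) / (2 * η) := by positivity
    linarith
  have hdist : ‖y' - z'‖ < ρ := by
    have h1 : (‖x - y'‖ ^ 2 + ‖x - z'‖ ^ 2) / (2 * η) ≤ Cst := by
      have b1 := (abs_le.1 (hMu y' hy'K)).2
      have b2 := (abs_le.1 (hMv z' hz'K)).1
      have := le_abs_self (Mu + Mv - S + τ)
      linarith
    rw [div_le_iff₀ (by positivity)] at h1
    have h2 : ‖y' - z'‖ ≤ ‖x - y'‖ + ‖x - z'‖ := by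
      have : y' - z' = (x - z') - (x - y') := by abel
      rw [this]; linarith [norm_sub_le (x - z') (x - y')]
    have h3 : ‖y' - z'‖ ^ 2 < ρ ^ 2 := by
      have := pow_le_pow_left₀ (norm_nonneg _) h2 2
      nlinarith [sq_nonneg (‖x - y'‖ - ‖x - z'‖)]
    exact lt_of_pow_lt_pow_left₀ 2 hρpos.le h3
  have d1 : ‖y' - z'‖ < ρu := hdist.trans_le ((min_le_left _ _).trans (min_le_left _ _))
  have d2 : ‖y' - z'‖ < ρv := hdist.trans_le ((min_le_left _ _).trans (min_le_right _ _))
  have d3 : ‖y' - z'‖ < ρg := hdist.trans_le ((min_le_right _ _).trans (min_le_left _ _))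
  have d4 : ‖y' - z'‖ < ρσ := hdist.trans_le ((min_le_right _ _).trans (min_le_right _ _))
  have w1 := abs_lt.1 (uu y' hy'K z' hz'K d1)
  have w2 := abs_lt.1 (uv y' hy'K z' hz'K d2)
  have w3 := abs_lt.1 (ug y' hy'K z' hz'K d3)
  have w4 := hσ' (y := ‖y' - z'‖) (by simpa using d4)
  have hy'D : y' ∈ D := by
    by_contra hn
    have := hbd y' (by rw [hD.frontier_eq]; exact ⟨hy'K, hn⟩)
    linarith
  have hz'D : z' ∈ D := by
    by_contra hn
    have := hbd z' (by rw [hD.frontier_eq]; exact ⟨hz'K, hn⟩)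
    linarith
  -- Both jets get the error `2r` in the Hessian, so the matrices are ordered up to `4r`.
  have ju := jet_of_supconv hD hηpos hy'D (hA x) (fun x y hy => hAle x y (subset_closure hy))
    hSA hrpos
  have jv := jet_of_supconv hD hηpos hz'D (hB x) (fun x y hy => hBle x y (subset_closure hy))
    hSB hrpos
  obtain ⟨X, hXs, hX⟩ := quadForm_add_scalar SA (2 * r - 1 / η)
  obtain ⟨X', hXs', hX'⟩ := quadForm_add_scalar (-SB) (-(2 * r - 1 / η))
  have tu := hsub y' hy'D ((1 / η) • (y' - x)) X hXs (by
    filter_upwards [ju] with y hy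
    rw [hX]; exact hy)
  have tv := hsup z' hz'D (-((1 / η) • (z' - x))) X' hXs' (by
    filter_upwards [jv] with y hy
    rw [hX', inner_neg_left]
    simp only [neg_apply, inner_neg_left, Pi.neg_apply] at hy ⊢
    linarith)
  have hfin := hG X X' hXs hXs' ((1 / η) • (y' - x)) (-((1 / η) • (z' - x))) (u y') (v z') (4 * r)
    (by positivity) (fun w => by
      rw [hX, hX']
      simp only [neg_apply, inner_neg_left]
      have := hSAB w
      have e1 : 2 / η * ‖w‖ ^ 2 = 2 * (1 / η * ‖w‖ ^ 2) := by ring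
      rw [e1] at this
      linarith)
    (by rw [sub_neg_eq_add, hpq]; linarith) (by linarith) y' hy'D z' hz'D
  simp only at tu tv
  have q1 := hfg z' hz'D
  have q2 := hfg y' hy'D
  rw [le_div_iff₀ hh] at tu
  rw [div_le_iff₀ hh] at tv
  have s1 : u y' / h * h = u y' := by field_simp
  have s2 : v z' / h * h = v z' := by field_simp
  rw [add_mul, s1] at tu
  rw [add_mul, s2] at tv
  have s3 := mul_le_mul_of_nonneg_right hfin hh.le
  rw [lt_div_iff₀ (by positivity)] at w4
  have s4 : σ ‖y' - z'‖ * h < τ / 8 := by linarith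
  have s5 : (c * (4 * r)) * h ≤ τ / 8 := by linarith
  nlinarith

/-! ### From test functions to quadratic jets -/

lemma gradAt_eq {d : ℕ} {φ : Eucl d → ℝ} {p x : Eucl d}
    (h : HasFDerivAt φ (innerSL ℝ p) x) : gradAt φ x = p := by
  unfold gradAt
  rw [h.fderiv]
  ext i
  simp [EuclideanSpace.inner_single_right]

lemma hessAt_eq {d : ℕ} {φ : Eucl d → ℝ} {g : Eucl d → Eucl d} {x : Eucl d}
    {X : Matrix (Fin d) (Fin d) ℝ} {L : Fin d → Eucl d →L[ℝ] ℝ}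
    (hφ : ∀ y, HasFDerivAt φ (innerSL ℝ (g y)) y)
    (hL : ∀ j, HasFDerivAt (fun y => g y j) (L j) x)
    (hX : ∀ i j, L j (EuclideanSpace.single i 1) = X i j) : hessAt φ x = X := by
  ext i j
  have h1 : (fun y => fderiv ℝ φ y (EuclideanSpace.single j 1)) = fun y => g y j := by
    funext y
    rw [(hφ y).fderiv]
    simp [EuclideanSpace.inner_single_right]
  simp only [hessAt, Matrix.of_apply]
  rw [h1, (hL j).fderiv, hX]

lemma quadForm_eq_mulVec {d : ℕ} (X : Matrix (Fin d) (Fin d) ℝ) (w : Eucl d) :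
    quadForm X w = WithLp.ofLp w ⬝ᵥ (X.mulVec (WithLp.ofLp w)) := by
  simp only [quadForm, dotProduct, Matrix.mulVec, Finset.mul_sum]
  refine Finset.sum_congr rfl fun i _ => Finset.sum_congr rfl fun j _ => by ring

/-- The test quadratic with gradient `p` and Hessian `X` at `x₀`. -/
lemma quad_test {d : ℕ} (a : ℝ) (p x₀ : Eucl d) {X : Matrix (Fin d) (Fin d) ℝ} (hX : X.IsSymm) :
    ContDiffAt ℝ 2 (fun x => a + ⟪p, x - x₀⟫ + quadForm X (x - x₀) / 2) x₀ ∧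
    gradAt (fun x => a + ⟪p, x - x₀⟫ + quadForm X (x - x₀) / 2) x₀ = p ∧
    hessAt (fun x => a + ⟪p, x - x₀⟫ + quadForm X (x - x₀) / 2) x₀ = X := by
  set g : Eucl d → Eucl d := fun y => WithLp.toLp 2 fun j => p j + ∑ i, X i j * (y i - x₀ i) with hg
  have hpr : ∀ (i : Fin d) (y : Eucl d), HasFDerivAt (fun y : Eucl d => y i - x₀ i)
      (EuclideanSpace.proj (𝕜 := ℝ) i : Eucl d →L[ℝ] ℝ) y := fun i y =>
    ((EuclideanSpace.proj (𝕜 := ℝ) i : Eucl d →L[ℝ] ℝ).hasFDerivAt).sub_const _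
  have hφ : ∀ y, HasFDerivAt (fun x => a + ⟪p, x - x₀⟫ + quadForm X (x - x₀) / 2)
      (innerSL ℝ (g y)) y := by
    intro y
    have h1 : HasFDerivAt (fun x : Eucl d => ⟪p, x - x₀⟫) (innerSL ℝ p) y := by
      have h : HasFDerivAt (fun x : Eucl d => (innerSL ℝ p) x) (innerSL ℝ p) y :=
        (innerSL ℝ p).hasFDerivAt
      simp only [inner_sub_right]
      exact h.sub_const _
    have h2 := HasFDerivAt.fun_sum (u := Finset.univ) fun i _ =>
      HasFDerivAt.fun_sum (u := Finset.univ) fun j _ =>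
        (((hpr i y).const_mul (X i j)).mul (hpr j y))
    refine ((h1.const_add a).add (h2.mul_const (2⁻¹))).congr_fderiv ?_
    ext v
    have hpv : ∀ i, (EuclideanSpace.proj (𝕜 := ℝ) i : Eucl d →L[ℝ] ℝ) v = v i := fun i => rfl
    simp only [hg, innerSL_apply_apply, PiLp.inner_apply, _root_.add_apply,
      _root_.smul_apply, _root_.sum_apply, hpv, smul_eq_mul, RCLike.inner_apply, conj_trivial, Finset.mul_sum,
      mul_add, Finset.sum_add_distrib]
    have e1 : ∑ i, ∑ j, 2⁻¹ * (X i j * (y i - x₀ i) * v j)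
        = ∑ i, ∑ j, 2⁻¹ * ((y j - x₀ j) * (X i j * v i)) := by
      rw [Finset.sum_comm]
      refine Finset.sum_congr rfl fun i _ => Finset.sum_congr rfl fun j _ => ?_
      rw [hX.apply i j]; ring
    rw [e1, ← Finset.sum_add_distrib]
    congr 1
    refine Finset.sum_congr rfl fun i _ => ?_
    rw [← Finset.sum_add_distrib]
    refine Finset.sum_congr rfl fun j _ => ?_
    rw [hX.apply i j]; ring
  have hsm : ContDiff ℝ 2 (fun x : Eucl d => a + ⟪p, x - x₀⟫ + quadForm X (x - x₀) / 2) := by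
    unfold quadForm
    have hc : ∀ i : Fin d, ContDiff ℝ 2 fun x : Eucl d => (x - x₀) i := fun i => by
      have : ContDiff ℝ 2 fun x : Eucl d =>
        (EuclideanSpace.proj (𝕜 := ℝ) i : Eucl d →L[ℝ] ℝ) (x - x₀) := by fun_prop
      exact this
    refine ContDiff.add (contDiff_const.add (contDiff_const.inner ℝ
      (contDiff_id.sub contDiff_const))) (ContDiff.div_const ?_ _)
    exact ContDiff.sum fun i _ => ContDiff.sum fun j _ => (contDiff_const.mul (hc i)).mul (hc j)
  refine ⟨hsm.contDiffAt, ?_, ?_⟩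
  · have := gradAt_eq (hφ x₀)
    rw [this]
    ext j
    simp [hg]
  · refine hessAt_eq (L := fun j => ∑ i, X i j • (EuclideanSpace.proj (𝕜 := ℝ) i : Eucl d →L[ℝ] ℝ))
      hφ (fun j => ?_) (fun i j => ?_)
    · exact (HasFDerivAt.fun_sum fun i _ => (hpr i x₀).const_mul (X i j)).const_add _
    · simp

lemma ViscSubsol.jetSub {d : ℕ} {Ω : Set (Eucl d)}
    {G : Matrix (Fin d) (Fin d) ℝ → Eucl d → ℝ → Eucl d → ℝ} {g u : Eucl d → ℝ}
    (h : ViscSubsol Ω G g u) : JetSub Ω G g u := by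
  intro x₀ hx₀ p X hX hev
  obtain ⟨h1, h2, h3⟩ := quad_test (u x₀) p x₀ hX
  have := h x₀ hx₀ _ h1 (by
    filter_upwards [hev] with x hx
    simp [quadForm]
    simp only [quadForm, PiLp.sub_apply] at hx
    linarith)
  rwa [h2, h3] at this

lemma ViscSupersol.jetSup {d : ℕ} {Ω : Set (Eucl d)}
    {G : Matrix (Fin d) (Fin d) ℝ → Eucl d → ℝ → Eucl d → ℝ} {g u : Eucl d → ℝ}
    (h : ViscSupersol Ω G g u) : JetSup Ω G g u := by
  intro x₀ hx₀ p X hX hev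
  obtain ⟨h1, h2, h3⟩ := quad_test (u x₀) p x₀ hX
  have := h x₀ hx₀ _ h1 (by
    filter_upwards [hev] with x hx
    simp [quadForm]
    simp only [quadForm, PiLp.sub_apply] at hx
    linarith)
  rwa [h2, h3] at this

/-! ### Spectral norm and Pucci operators -/

lemma specNorm_nonneg {d : ℕ} (M : Matrix (Fin d) (Fin d) ℝ) : 0 ≤ specNorm M :=
  Real.iSup_nonneg fun _ => abs_nonneg _

lemma abs_eigs_le_specNorm {d : ℕ} (M : Matrix (Fin d) (Fin d) ℝ) (i : Fin d) :
    |eigs M i| ≤ specNorm M :=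
  le_ciSup (f := fun i => |eigs M i|) (Set.finite_range _).bddAbove i

lemma specNorm_smul_one_le {d : ℕ} {δ : ℝ} (hδ : 0 ≤ δ) :
    specNorm (δ • (1 : Matrix (Fin d) (Fin d) ℝ)) ≤ δ := by
  have hH : (δ • (1 : Matrix (Fin d) (Fin d) ℝ)).IsHermitian := by
    ext i j; simp [Matrix.one_apply, eq_comm]
  refine Real.iSup_le (fun i => ?_) hδ
  rw [eigs, dif_pos hH]
  have h := hH.mulVec_eigenvectorBasis i
  have hne := hH.eigenvectorBasis.orthonormal.ne_zero i
  rw [Matrix.smul_mulVec, Matrix.one_mulVec] at h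
  have h2 : (δ - hH.eigenvalues i) • hH.eigenvectorBasis i = 0 := by
    rw [sub_smul, sub_eq_zero]
    ext k
    simpa using congrFun h k
  rcases smul_eq_zero.1 h2 with h3 | h3
  · have : hH.eigenvalues i = δ := by linarith
    rw [this, abs_of_nonneg hδ]
  · exact absurd h3 hne

lemma le_specNorm_vecMulVec {d : ℕ} (c : ℝ) {w : Eucl d} (hw : w ≠ 0) :
    c * ‖w‖ ^ 2 ≤ specNorm (c • Matrix.vecMulVec (WithLp.ofLp w) (WithLp.ofLp w)) := by
  set N := c • Matrix.vecMulVec (WithLp.ofLp w) (WithLp.ofLp w) with hN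
  have hH : N.IsHermitian := by
    ext i j; simp [hN, Matrix.vecMulVec_apply, mul_comm]
  have hn : ‖w‖ ^ 2 = WithLp.ofLp w ⬝ᵥ WithLp.ofLp w := by
    rw [EuclideanSpace.real_norm_sq_eq]; simp [dotProduct, sq]
  have hv : N.mulVec (WithLp.ofLp w) = (c * ‖w‖ ^ 2) • WithLp.ofLp w := by
    rw [hN, Matrix.smul_mulVec, Matrix.vecMulVec_mulVec, hn]
    ext i; simp; ring
  have hne : WithLp.ofLp w ≠ 0 := by
    intro h; exact hw (by ext i; simpa using congrFun h i)
  have hev : Module.End.HasEigenvalue (Matrix.toLin' N) (c * ‖w‖ ^ 2) :=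
    Module.End.hasEigenvalue_of_hasEigenvector
      (x := WithLp.ofLp w) ⟨Module.End.mem_eigenspace_iff.2 (by simpa using hv), hne⟩
  have hs := hev.mem_spectrum
  rw [Matrix.spectrum_toLin', hH.spectrum_real_eq_range_eigenvalues] at hs
  obtain ⟨i, hi⟩ := hs
  have := abs_eigs_le_specNorm N i
  rw [eigs, dif_pos hH, hi] at this
  exact (le_abs_self _).trans this

lemma eigs_zero {d : ℕ} : eigs (0 : Matrix (Fin d) (Fin d) ℝ) = 0 := by
  have hH : (0 : Matrix (Fin d) (Fin d) ℝ).IsHermitian := Matrix.isHermitian_zero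
  rw [eigs, dif_pos hH]
  exact hH.eigenvalues_eq_zero_iff.2 rfl

lemma pucciPlus_zero {d : ℕ} (lam Lam : ℝ) :
    pucciPlus lam Lam (0 : Matrix (Fin d) (Fin d) ℝ) = 0 := by
  simp [pucciPlus, posPartTrace, negPartTrace, eigs_zero]

lemma pucciMinus_zero {d : ℕ} (lam Lam : ℝ) :
    pucciMinus lam Lam (0 : Matrix (Fin d) (Fin d) ℝ) = 0 := by
  simp [pucciMinus, posPartTrace, negPartTrace, eigs_zero]

lemma posSemidef_of_quadForm {d : ℕ} {N : Matrix (Fin d) (Fin d) ℝ} (hN : N.IsSymm)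
    (h : ∀ w, 0 ≤ quadForm N w) : N.PosSemidef := by
  refine Matrix.PosSemidef.of_dotProduct_mulVec_nonneg ?_ fun v => ?_
  · rw [Matrix.IsHermitian, Matrix.conjTranspose_eq_transpose_of_trivial]; exact hN
  · have := h (WithLp.toLp 2 v)
    rw [quadForm_eq_mulVec] at this
    simpa using this

/-! ### Consequences of ellipticity and of the structure condition -/

section operator

variable {d : ℕ} {lam Lam gam K : ℝ} {X₀ : Set (Eucl d)} {Tset : Set ℝ}
  {F : Matrix (Fin d) (Fin d) ℝ → Eucl d → ℝ → Eucl d → ℝ → ℝ} {ω : ℝ → ℝ → ℝ}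

/-- Lipschitz dependence on the gradient and monotonicity in the zeroth-order variable. -/
lemma StructureCondition.first_order (hS : StructureCondition lam Lam gam ω X₀ Tset F)
    {M : Matrix (Fin d) (Fin d) ℝ} (hM : M.IsSymm) (p q : Eucl d) {r s : ℝ} (hrs : s ≤ r)
    {x : Eucl d} (hx : x ∈ X₀) {t : ℝ} (ht : t ∈ Tset) :
    F M q s x t ≤ F M p r x t + gam * ‖p - q‖ := by
  have hR : 0 < |r| + |s| + 1 := by positivity
  have h := (hS.2 _ hR M M hM hM q p s r (by linarith [abs_nonneg r])
    (by linarith [abs_nonneg s]) x hx t ht).2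
  rw [sub_self, pucciPlus_zero, max_eq_right (by linarith), (hS.1 _ hR).2.2,
    norm_sub_rev] at h
  linarith

/-- Degenerate ellipticity up to errors of size `δ` in the matrix and in the gradient. -/
lemma elliptic_perturb (hLam : 0 ≤ Lam) (hlam : 0 ≤ lam) (hgam : 0 ≤ gam)
    (hUE : UniformlyElliptic lam Lam X₀ Tset F)
    (hS : StructureCondition lam Lam gam ω X₀ Tset F)
    {X Y : Matrix (Fin d) (Fin d) ℝ} (hX : X.IsSymm) (hY : Y.IsSymm) {p q : Eucl d} {r s δ : ℝ}
    (hδ : 0 < δ) (hXY : ∀ w, quadForm X w ≤ quadForm Y w + δ * ‖w‖ ^ 2) (hpq : ‖p - q‖ ≤ δ)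
    (hrs : s ≤ r) {x : Eucl d} (hx : x ∈ X₀) {t : ℝ} (ht : t ∈ Tset) :
    F Y q s x t ≤ F X p r x t + (gam + Lam) * δ := by
  have h1 := (hUE Y (δ • 1) hY (Matrix.PosSemidef.one.smul hδ.le) q s x hx t ht).1
  have hsy : (Y + δ • (1 : Matrix (Fin d) (Fin d) ℝ) - X).IsSymm := by
    refine (hY.add ?_).sub hX
    ext i j; simp [Matrix.one_apply, eq_comm]
  have hpsd : (Y + δ • (1 : Matrix (Fin d) (Fin d) ℝ) - X).PosSemidef := by
    refine posSemidef_of_quadForm hsy fun w => ?_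
    have := hXY w
    have h2 : ‖w‖ ^ 2 = WithLp.ofLp w ⬝ᵥ WithLp.ofLp w := by
      rw [EuclideanSpace.real_norm_sq_eq]; simp [dotProduct, sq]
    rw [quadForm_eq_mulVec, quadForm_eq_mulVec, h2] at this
    rw [quadForm_eq_mulVec, Matrix.sub_mulVec, Matrix.add_mulVec, Matrix.smul_mulVec,
      Matrix.one_mulVec, dotProduct_sub, dotProduct_add, dotProduct_smul, smul_eq_mul]
    linarith
  have h2 := (hUE X _ hX hpsd q s x hx t ht).2
  rw [add_sub_cancel] at h2
  have h3 := hS.first_order hX p q hrs hx ht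
  have h4 := mul_nonneg hlam (specNorm_nonneg (Y + δ • (1 : Matrix (Fin d) (Fin d) ℝ) - X))
  have h5 := mul_le_mul_of_nonneg_left (specNorm_smul_one_le (d := d) hδ.le) hLam
  have h6 := mul_le_mul_of_nonneg_left hpq hgam
  linarith

/-- Hypothesis `hG` of `comparison` for two copies of `F` shifted in space and time. -/
lemma shifted_compare (hLam : 0 ≤ Lam) (hlam : 0 ≤ lam) (hgam : 0 ≤ gam)
    (hUE : UniformlyElliptic lam Lam X₀ Tset F)
    (hS : StructureCondition lam Lam gam ω X₀ Tset F) {σ₁ σ₂ : ℝ → ℝ} (hσ₂ : IsModulus σ₂)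
    (hjoint : ∀ (M : Matrix (Fin d) (Fin d) ℝ) (P : Eucl d) (r : ℝ),
      ∀ x ∈ X₀, ∀ y ∈ X₀, ∀ t ∈ Tset, ∀ s ∈ Tset,
        |F M P r x t - F M P r y s| ≤ σ₁ ‖x - y‖ + σ₂ |t - s|)
    {D : Set (Eucl d)} {ξ₁ ξ₂ : Eucl d} (hD₁ : ∀ x ∈ D, x + ξ₁ ∈ X₀) (hD₂ : ∀ x ∈ D, x + ξ₂ ∈ X₀)
    {t₁ t₂ : ℝ} (ht₁ : t₁ ∈ Tset) (ht₂ : t₂ ∈ Tset) :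
    ∀ X Y : Matrix (Fin d) (Fin d) ℝ, X.IsSymm → Y.IsSymm →
      ∀ (p q : Eucl d) (r s δ : ℝ), 0 < δ →
      (∀ w, quadForm X w ≤ quadForm Y w + δ * ‖w‖ ^ 2) → ‖p - q‖ ≤ δ → s ≤ r →
      ∀ x ∈ D, ∀ y ∈ D, F Y q s (y + ξ₂) t₂ ≤ F X p r (x + ξ₁) t₁
        + (σ₁ ‖ξ₁ - ξ₂‖ + σ₂ |t₁ - t₂|) + σ₁ ‖x - y‖ + (gam + Lam) * δ := by
  intro X Y hX hY p q r s δ hδ hXY hpq hrs x hx y hy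
  have h1 := abs_le.1 (hjoint Y q s _ (hD₂ x hx) _ (hD₂ y hy) _ ht₂ _ ht₂)
  have h2 := abs_le.1 (hjoint Y q s _ (hD₁ x hx) _ (hD₂ x hx) _ ht₁ _ ht₂)
  have h3 := elliptic_perturb hLam hlam hgam hUE hS hX hY hδ hXY hpq hrs (hD₁ x hx) ht₁
  rw [add_sub_add_right_eq_sub, sub_self, abs_zero, hσ₂.2.2] at h1
  rw [add_sub_add_left_eq_sub] at h2
  linarith [h1.1, h2.1]

/-- Lower bound for `F` on a Hessian split as `N₁ - N₂`: the negative part `N₂` gains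
`lam * ‖N₂‖`, which makes a suitable barrier a strict supersolution. -/
lemma barrier_lower (hUE : UniformlyElliptic lam Lam X₀ Tset F)
    (hS : StructureCondition lam Lam gam ω X₀ Tset F)
    (hFK : ∀ x ∈ X₀, ∀ t ∈ Tset, |F 0 0 0 x t| ≤ K)
    {N₁ N₂ : Matrix (Fin d) (Fin d) ℝ} (h₁ : N₁.PosSemidef) (h₂ : N₂.PosSemidef)
    (p : Eucl d) {r : ℝ} (hr : 0 ≤ r) {x : Eucl d} (hx : x ∈ X₀) {t : ℝ} (ht : t ∈ Tset) :
    -K + lam * specNorm N₂ - Lam * specNorm N₁ - gam * ‖p‖ ≤ F (N₁ - N₂) p r x t := by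
  have hsym : ∀ {N : Matrix (Fin d) (Fin d) ℝ}, N.PosSemidef → N.IsSymm := fun h => by
    have := h.isHermitian
    rwa [Matrix.IsHermitian, Matrix.conjTranspose_eq_transpose_of_trivial] at this
  have a1 := (hUE (N₁ - N₂) N₂ ((hsym h₁).sub (hsym h₂)) h₂ p r x hx t ht).2
  have a2 := (hUE 0 N₁ Matrix.isSymm_zero h₁ p r x hx t ht).1
  rw [sub_add_cancel] at a1
  rw [zero_add] at a2
  have a3 := hS.first_order (Matrix.isSymm_zero (n := Fin d)) p 0 hr hx ht
  rw [sub_zero] at a3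
  have a4 := abs_le.1 (hFK x hx t ht)
  linarith [a4.1]

/-- The reflected form of `barrier_lower`, for subsolution barriers. -/
lemma barrier_upper (hUE : UniformlyElliptic lam Lam X₀ Tset F)
    (hS : StructureCondition lam Lam gam ω X₀ Tset F)
    (hFK : ∀ x ∈ X₀, ∀ t ∈ Tset, |F 0 0 0 x t| ≤ K)
    {N₁ N₂ : Matrix (Fin d) (Fin d) ℝ} (h₁ : N₁.PosSemidef) (h₂ : N₂.PosSemidef)
    (p : Eucl d) {r : ℝ} (hr : r ≤ 0) {x : Eucl d} (hx : x ∈ X₀) {t : ℝ} (ht : t ∈ Tset) :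
    F (N₂ - N₁) p r x t ≤ K - lam * specNorm N₂ + Lam * specNorm N₁ + gam * ‖p‖ := by
  have hsym : ∀ {N : Matrix (Fin d) (Fin d) ℝ}, N.PosSemidef → N.IsSymm := fun h => by
    have := h.isHermitian
    rwa [Matrix.IsHermitian, Matrix.conjTranspose_eq_transpose_of_trivial] at this
  have a1 := (hUE (N₂ - N₁) N₁ ((hsym h₂).sub (hsym h₁)) h₁ p r x hx t ht).1
  have a2 := (hUE 0 N₂ Matrix.isSymm_zero h₂ p r x hx t ht).2
  rw [sub_add_cancel] at a1
  rw [zero_add] at a2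
  have a3 := hS.first_order (Matrix.isSymm_zero (n := Fin d)) 0 p hr hx ht
  rw [zero_sub, norm_neg] at a3
  have a4 := abs_le.1 (hFK x hx t ht)
  linarith [a4.2]

end operator

/-! ### Exterior balls and the boundary barrier -/

/-- Uniform exterior ball condition: the ball is centred along the outward normal `∇f`, and its
radius is governed by the Lipschitz constant of `Df` and a lower bound for `|∇f|` on `∂Ω`. -/
lemma exterior_ball {d : ℕ} {Ω : Set (Eucl d)} (hb : Bornology.IsBounded Ω)
    (hs : HasSmoothBoundary Ω) :
    ∃ R > 0, ∀ y ∈ frontier Ω, ∃ c, ‖y - c‖ = R ∧ ∀ x ∈ closure Ω, R ≤ ‖x - c‖ := by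
  obtain ⟨f, hf, rfl, hd⟩ := hs
  set Ω : Set (Eucl d) := {x | f x < 0} with hΩ
  have hcf : Continuous f := hf.continuous
  have hfd : ContDiff ℝ 1 (fderiv ℝ f) := (contDiff_infty_iff_fderiv.1 hf).2.of_le (by
    exact_mod_cast le_top)
  have hopen : IsOpen Ω := isOpen_lt hcf continuous_const
  obtain ⟨ρ, hρ⟩ := hb.closure.subset_closedBall (0 : Eucl d)
  have hfr : frontier Ω ⊆ closure Ω := frontier_subset_closure
  have hfc : IsCompact (frontier Ω) := hb.isCompact_closure.of_isClosed_subset isClosed_frontier hfr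
  have hcont : Continuous (fderiv ℝ f) := hfd.continuous
  obtain ⟨m, hm, hmle⟩ : ∃ m > 0, ∀ y ∈ frontier Ω, m ≤ ‖fderiv ℝ f y‖ := by
    rcases (frontier Ω).eq_empty_or_nonempty with h0 | h0
    · exact ⟨1, one_pos, by simp [h0]⟩
    · obtain ⟨y, hy, hmin⟩ := hfc.exists_isMinOn h0 hcont.norm.continuousOn
      exact ⟨‖fderiv ℝ f y‖, norm_pos_iff.2 (hd y hy), fun x hx => hmin hx⟩
  obtain ⟨C, hC⟩ : ∃ C, ∀ x ∈ closedBall (0 : Eucl d) ρ, ‖fderiv ℝ (fderiv ℝ f) x‖ ≤ C :=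
    (isCompact_closedBall (0 : Eucl d) ρ).exists_bound_of_continuousOn
      (hfd.continuous_fderiv one_ne_zero).continuousOn
  have hC' : ∀ x ∈ closedBall (0 : Eucl d) ρ, ∀ y ∈ closedBall (0 : Eucl d) ρ,
      ‖fderiv ℝ f x - fderiv ℝ f y‖ ≤ max C 0 * ‖x - y‖ := fun x hx y hy =>
    Convex.norm_image_sub_le_of_norm_fderiv_le (𝕜 := ℝ)
      (fun z _ => (hfd.differentiable one_ne_zero) z) (fun z hz => (hC z hz).trans (le_max_left _ _))
      (convex_closedBall _ _) hy hx
  have htay : ∀ x ∈ closure Ω, ∀ y ∈ closure Ω,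
      ‖f x - f y - fderiv ℝ f y (x - y)‖ ≤ max C 0 * ‖x - y‖ * ‖x - y‖ := by
    intro x hx y hy
    refine Convex.norm_image_sub_le_of_norm_fderiv_le' (𝕜 := ℝ) (s := segment ℝ y x)
      (fun z _ => (hf.differentiable (by simp)) z) (fun z hz => ?_)
      (convex_segment y x) (left_mem_segment ℝ y x) (right_mem_segment ℝ y x)
    refine (hC' z ((convex_closedBall _ _).segment_subset (hρ hy) (hρ hx) hz) y (hρ hy)).trans ?_
    refine mul_le_mul_of_nonneg_left ?_ (le_max_right _ _)
    exact norm_sub_le_of_mem_segment hz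
  set C' := max C 0
  have hC'0 : 0 ≤ C' := le_max_right _ _
  refine ⟨m / (2 * (C' + 1)), by positivity, fun y hy => ?_⟩
  set R := m / (2 * (C' + 1)) with hR
  have hR0 : 0 < R := by positivity
  set ν : Eucl d := (InnerProductSpace.toDual ℝ (Eucl d)).symm (fderiv ℝ f y) with hν
  have hνn : ‖ν‖ = ‖fderiv ℝ f y‖ := by simp [hν]
  have hνi : ∀ v, ⟪ν, v⟫ = fderiv ℝ f y v := fun v => by simp [hν]
  have hνm : m ≤ ‖ν‖ := hνn ▸ hmle y hy
  have hν0 : 0 < ‖ν‖ := hm.trans_le hνm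
  have hcn : ‖(R / ‖ν‖) • ν‖ = R := by
    rw [norm_smul, Real.norm_of_nonneg (by positivity)]; field_simp
  refine ⟨y + (R / ‖ν‖) • ν, by rw [sub_add_cancel_left, norm_neg, hcn], fun x hx => ?_⟩
  have hfx : f x ≤ 0 := by
    have : closure Ω ⊆ {x | f x ≤ 0} :=
      closure_minimal (fun z (hz : f z < 0) => (hz.le : f z ≤ 0)) (isClosed_le hcf continuous_const)
    exact this hx
  have hfy : 0 ≤ f y := by
    by_contra! hlt
    rw [hopen.frontier_eq] at hy
    exact hy.2 hlt
  have h1 := htay x hx y (hfr hy)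
  rw [← hνi, Real.norm_eq_abs] at h1
  have h2 := (abs_le.1 h1).1
  have h3 : ⟪ν, x - y⟫ ≤ C' * ‖x - y‖ ^ 2 := by nlinarith
  have h4 : ‖x - (y + (R / ‖ν‖) • ν)‖ ^ 2
      = ‖x - y‖ ^ 2 - 2 * (R / ‖ν‖) * ⟪ν, x - y⟫ + R ^ 2 := by
    rw [← sub_sub, norm_sub_sq_real, hcn, real_inner_smul_right, real_inner_comm]; ring
  have h5 : R / ‖ν‖ * (2 * C') ≤ 1 := by
    rw [div_mul_eq_mul_div, div_le_one hν0]
    refine le_trans ?_ hνm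
    rw [hR, div_mul_eq_mul_div, div_le_iff₀ (by positivity)]
    nlinarith
  have h6 : 2 * (R / ‖ν‖) * ⟪ν, x - y⟫ ≤ ‖x - y‖ ^ 2 := by
    have h7 : 0 ≤ R / ‖ν‖ := by positivity
    calc 2 * (R / ‖ν‖) * ⟪ν, x - y⟫ ≤ 2 * (R / ‖ν‖) * (C' * ‖x - y‖ ^ 2) := by gcongr
      _ = (R / ‖ν‖ * (2 * C')) * ‖x - y‖ ^ 2 := by ring
      _ ≤ 1 * ‖x - y‖ ^ 2 := by gcongr
      _ = _ := one_mul _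
  refine (sq_le_sq₀ hR0.le (norm_nonneg _)).1 ?_
  rw [h4]; linarith

/-- Gradient and Hessian of the exponential barrier centred at `c`. -/
lemma barrier_deriv {d : ℕ} (A μ e₀ : ℝ) (c x : Eucl d) :
    ContDiff ℝ 2 (fun y : Eucl d => A * (e₀ - Real.exp (-μ * ‖y - c‖ ^ 2))) ∧
    gradAt (fun y : Eucl d => A * (e₀ - Real.exp (-μ * ‖y - c‖ ^ 2))) x
      = (2 * μ * A * Real.exp (-μ * ‖x - c‖ ^ 2)) • (x - c) ∧
    hessAt (fun y : Eucl d => A * (e₀ - Real.exp (-μ * ‖y - c‖ ^ 2))) x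
      = (2 * μ * A * Real.exp (-μ * ‖x - c‖ ^ 2)) • (1 : Matrix (Fin d) (Fin d) ℝ)
        - (4 * μ ^ 2 * A * Real.exp (-μ * ‖x - c‖ ^ 2)) •
          Matrix.vecMulVec (WithLp.ofLp (x - c)) (WithLp.ofLp (x - c)) := by
  have he : ∀ y, HasFDerivAt (fun y : Eucl d => Real.exp (-μ * ‖y - c‖ ^ 2))
      (innerSL ℝ ((-2 * μ * Real.exp (-μ * ‖y - c‖ ^ 2)) • (y - c))) y := by
    intro y
    have h1 : HasFDerivAt (fun y : Eucl d => ‖y - c‖ ^ 2) (2 • innerSL ℝ (y - c)) y :=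
      ((hasFDerivAt_id y).sub_const c).norm_sq
    refine ((h1.const_mul (-μ)).exp).congr_fderiv ?_
    ext v
    simp
    ring
  have hφ : ∀ y, HasFDerivAt (fun y : Eucl d => A * (e₀ - Real.exp (-μ * ‖y - c‖ ^ 2)))
      (innerSL ℝ ((2 * μ * A * Real.exp (-μ * ‖y - c‖ ^ 2)) • (y - c))) y := by
    intro y
    refine (((he y).const_sub e₀).const_mul A).congr_fderiv ?_
    ext v
    simp
    ring
  refine ⟨?_, gradAt_eq (hφ x), ?_⟩
  · have : ContDiff ℝ 2 fun y : Eucl d => ‖y - c‖ ^ 2 :=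
      (contDiff_id.sub contDiff_const).norm_sq ℝ
    exact contDiff_const.mul (contDiff_const.sub (Real.contDiff_exp.comp (contDiff_const.mul this)))
  · have hpr : ∀ (i : Fin d) (y : Eucl d), HasFDerivAt (fun y : Eucl d => y i - c i)
        (EuclideanSpace.proj (𝕜 := ℝ) i : Eucl d →L[ℝ] ℝ) y := fun i y =>
      ((EuclideanSpace.proj (𝕜 := ℝ) i : Eucl d →L[ℝ] ℝ).hasFDerivAt).sub_const _
    refine hessAt_eq (L := fun j => _) hφ
      (fun j => ((he x).const_mul (2 * μ * A)).mul (hpr j x)) (fun i j => ?_)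
    simp only [_root_.add_apply, _root_.smul_apply, innerSL_apply_apply]
    by_cases hij : i = j
    · subst hij
      simp [Matrix.vecMulVec_apply, EuclideanSpace.inner_single_right]
      ring
    · simp [Matrix.vecMulVec_apply, EuclideanSpace.inner_single_right, hij, Ne.symm hij]
      ring

/-- The constants of the barrier: `μ` is large enough for the rank-one part of the Hessian to beat
the other second-order part and the gradient term on `R ≤ ‖w‖ ≤ ρ`. -/
lemma barrier_constants {d : ℕ} {lam Lam gam K R ρ : ℝ} (hlam : 0 < lam) (hLam : 0 ≤ Lam)
    (hgam : 0 ≤ gam) (hK : 0 ≤ K) (hR : 0 < R) (hρ : 0 ≤ ρ) :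
    ∃ A μ : ℝ, 0 ≤ A ∧ 0 < μ ∧ ∀ w : Eucl d, R ≤ ‖w‖ → ‖w‖ ≤ ρ →
      K ≤ lam * specNorm ((4 * μ ^ 2 * A * Real.exp (-μ * ‖w‖ ^ 2)) •
          Matrix.vecMulVec (WithLp.ofLp w) (WithLp.ofLp w))
        - Lam * specNorm ((2 * μ * A * Real.exp (-μ * ‖w‖ ^ 2)) • (1 : Matrix (Fin d) (Fin d) ℝ))
        - gam * ‖(2 * μ * A * Real.exp (-μ * ‖w‖ ^ 2)) • w‖ := by
  obtain ⟨μ, hμ0, hμ⟩ : ∃ μ > 0, 2 * lam * μ * R ^ 2 = Lam + gam * ρ + 1 :=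
    ⟨(Lam + gam * ρ + 1) / (2 * lam * R ^ 2), by positivity, by field_simp⟩
  refine ⟨K / (2 * μ * Real.exp (-μ * ρ ^ 2)), μ, by positivity, hμ0, fun w hw hwρ => ?_⟩
  set A := K / (2 * μ * Real.exp (-μ * ρ ^ 2)) with hA
  set E := Real.exp (-μ * ‖w‖ ^ 2) with hE
  have hA0 : 0 ≤ A := by positivity
  have hE0 : 0 < E := Real.exp_pos _
  have hEρ : Real.exp (-μ * ρ ^ 2) ≤ E := by
    refine Real.exp_le_exp.2 ?_
    have : ‖w‖ ^ 2 ≤ ρ ^ 2 := by gcongr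
    nlinarith
  have hw0 : w ≠ 0 := norm_pos_iff.1 (hR.trans_le hw)
  have h1 := le_specNorm_vecMulVec (4 * μ ^ 2 * A * E) hw0
  have h2 := specNorm_smul_one_le (d := d) (δ := 2 * μ * A * E) (by positivity)
  have h3 : ‖(2 * μ * A * E) • w‖ = 2 * μ * A * E * ‖w‖ := by
    rw [norm_smul, Real.norm_of_nonneg (by positivity)]
  have hKeq : K = 2 * μ * A * Real.exp (-μ * ρ ^ 2) := by rw [hA]; field_simp
  have hB0 : 0 ≤ 2 * μ * A * E := by positivity
  have h4 : 1 ≤ 2 * lam * μ * ‖w‖ ^ 2 - Lam - gam * ‖w‖ := by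
    have : R ^ 2 ≤ ‖w‖ ^ 2 := by gcongr
    have a1 : 2 * lam * μ * R ^ 2 ≤ 2 * lam * μ * ‖w‖ ^ 2 := by gcongr
    have a2 : gam * ‖w‖ ≤ gam * ρ := by gcongr
    linarith
  calc K ≤ 2 * μ * A * E := by rw [hKeq]; gcongr
    _ = (2 * μ * A * E) * 1 := (mul_one _).symm
    _ ≤ (2 * μ * A * E) * (2 * lam * μ * ‖w‖ ^ 2 - Lam - gam * ‖w‖) := by gcongr
    _ = lam * (4 * μ ^ 2 * A * E * ‖w‖ ^ 2) - Lam * (2 * μ * A * E)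
        - gam * (2 * μ * A * E * ‖w‖) := by ring
    _ ≤ _ := by rw [h3]; gcongr

/-- Uniform Lipschitz bound at the boundary for all Rothe approximations. -/
lemma boundary_lip {d : ℕ} {lam Lam gam K : ℝ} {Ω : Set (Eucl d)}
    {F : Matrix (Fin d) (Fin d) ℝ → Eucl d → ℝ → Eucl d → ℝ → ℝ} {ω : ℝ → ℝ → ℝ}
    (hlam : 0 < lam) (hLam : 0 ≤ Lam) (hgam : 0 ≤ gam) (hK : 0 ≤ K)
    (hΩo : IsOpen Ω) (hΩb : Bornology.IsBounded Ω) (hΩsm : HasSmoothBoundary Ω)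
    (hUE : UniformlyElliptic lam Lam (closure Ω) (Ici 0) F)
    (hS : StructureCondition lam Lam gam ω (closure Ω) (Ici 0) F)
    (hFK : ∀ x ∈ closure Ω, ∀ t ∈ Ici (0:ℝ), |F 0 0 0 x t| ≤ K) :
    ∃ L ≥ 0, ∀ h > 0, ∀ z : ℕ → Eucl d → ℝ, (∀ x, z 0 x = 0) →
      (∀ m, RotheStep Ω F h m (z m) (z (m + 1))) →
      ∀ n, ∀ y ∈ frontier Ω, ∀ x ∈ closure Ω, |z n x| ≤ L * ‖x - y‖ := by
  obtain ⟨R, hR, hball⟩ := exterior_ball hΩb hΩsm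
  obtain ⟨Δ, hΔ⟩ := hΩb.closure.exists_norm_le
  set ρ := max (2 * Δ) 0 + R with hρ
  have hρ0 : 0 ≤ ρ := by positivity
  obtain ⟨A, μ, hA, hμ, hbar⟩ := barrier_constants (d := d) hlam hLam hgam hK hR hρ0
  refine ⟨A * μ * (2 * ρ), by positivity, fun h hh z hz0 hz n y hy x hx => ?_⟩
  obtain ⟨c, hyc, hc⟩ := hball y hy
  have hcρ : ∀ x ∈ closure Ω, ‖x - c‖ ≤ ρ := fun x hx => by
    have h1 : ‖x - c‖ ≤ ‖x - y‖ + ‖y - c‖ := norm_sub_le_norm_sub_add_norm_sub x y c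
    have h2 : ‖x - y‖ ≤ ‖x‖ + ‖y‖ := norm_sub_le x y
    have h3 := hΔ x hx
    have h4 := hΔ y (frontier_subset_closure hy)
    have h5 := le_max_left (2 * Δ) 0
    rw [hρ]; linarith
  set b : Eucl d → ℝ := fun x =>
    A * (Real.exp (-μ * R ^ 2) - Real.exp (-μ * ‖x - c‖ ^ 2)) with hb
  have hb0 : ∀ x ∈ closure Ω, 0 ≤ b x := fun x hx => by
    refine mul_nonneg hA (sub_nonneg.2 (Real.exp_le_exp.2 ?_))
    have : R ^ 2 ≤ ‖x - c‖ ^ 2 := by have := hc x hx; gcongr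
    nlinarith
  have hbc : Continuous b := by rw [hb]; fun_prop
  have hbnd : ∀ n, ∀ x ∈ closure Ω, |z n x| ≤ b x := by
    intro n
    induction n with
    | zero => intro x hx; rw [hz0, abs_zero]; exact hb0 x hx
    | succ n ih =>
      obtain ⟨hzc, ⟨hsub, hsup⟩, hzf⟩ := hz n
      have ht : ((n : ℝ) + 1) * h ∈ Ici (0:ℝ) := by rw [mem_Ici]; positivity
      have hup : ∀ x ∈ closure Ω, z (n + 1) x ≤ b x := by
        intro x hx
        obtain ⟨x₀, hx₀, hmax⟩ := hΩb.isCompact_closure.exists_isMaxOn ⟨x, hx⟩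
          (hzc.sub hbc.continuousOn)
        have hxx₀ : z (n + 1) x - b x ≤ z (n + 1) x₀ - b x₀ := hmax hx
        suffices z (n + 1) x₀ ≤ b x₀ by linarith
        by_contra! hlt
        by_cases hfr : x₀ ∈ frontier Ω
        · have := hb0 x₀ hx₀
          rw [hzf x₀ hfr] at hlt; linarith
        have hxΩ : x₀ ∈ Ω := by
          rw [hΩo.frontier_eq] at hfr
          by_contra hn; exact hfr ⟨hx₀, hn⟩
        obtain ⟨d1, d2, d3⟩ := barrier_deriv A μ (Real.exp (-μ * R ^ 2)) c x₀
        have hv := hsub x₀ hxΩ b d1.contDiffAt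
          ((hmax.on_subset subset_closure).isLocalMax (hΩo.mem_nhds hxΩ))
        rw [d2, d3] at hv
        have hw := hbar (x₀ - c) (hc x₀ hx₀) (hcρ x₀ hx₀)
        have hF := barrier_lower hUE hS hFK
          (N₁ := (2 * μ * A * Real.exp (-μ * ‖x₀ - c‖ ^ 2)) • 1)
          (N₂ := (4 * μ ^ 2 * A * Real.exp (-μ * ‖x₀ - c‖ ^ 2)) •
            Matrix.vecMulVec (WithLp.ofLp (x₀ - c)) (WithLp.ofLp (x₀ - c)))
          (Matrix.PosSemidef.one.smul (by positivity))
          ((Matrix.posSemidef_vecMulVec_self_star _).smul (by positivity))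
          ((2 * μ * A * Real.exp (-μ * ‖x₀ - c‖ ^ 2)) • (x₀ - c)) (r := z (n + 1) x₀)
          ((hb0 x₀ hx₀).trans hlt.le) hx₀ ht
        have hlt2 : z n x₀ / h < z (n + 1) x₀ / h := by
          gcongr
          exact ((le_abs_self _).trans (ih x₀ hx₀)).trans_lt hlt
        linarith
      have hlo : ∀ x ∈ closure Ω, -b x ≤ z (n + 1) x := by
        intro x hx
        obtain ⟨x₀, hx₀, hmin⟩ := hΩb.isCompact_closure.exists_isMinOn ⟨x, hx⟩
          (hzc.sub hbc.neg.continuousOn)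
        have hxx₀ : z (n + 1) x₀ - -b x₀ ≤ z (n + 1) x - -b x := hmin hx
        suffices -b x₀ ≤ z (n + 1) x₀ by linarith
        by_contra! hlt
        by_cases hfr : x₀ ∈ frontier Ω
        · have := hb0 x₀ hx₀
          rw [hzf x₀ hfr] at hlt; linarith
        have hxΩ : x₀ ∈ Ω := by
          rw [hΩo.frontier_eq] at hfr
          by_contra hn; exact hfr ⟨hx₀, hn⟩
        have hbn : (fun x => -b x) = fun x : Eucl d =>
            (-A) * (Real.exp (-μ * R ^ 2) - Real.exp (-μ * ‖x - c‖ ^ 2)) := by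
          funext x; simp only [hb]; ring
        obtain ⟨d1, d2, d3⟩ := barrier_deriv (-A) μ (Real.exp (-μ * R ^ 2)) c x₀
        rw [← hbn] at d1 d2 d3
        have hv := hsup x₀ hxΩ (fun x => -b x) d1.contDiffAt
          ((hmin.on_subset subset_closure).isLocalMin (hΩo.mem_nhds hxΩ))
        rw [d2, d3] at hv
        have hw := hbar (x₀ - c) (hc x₀ hx₀) (hcρ x₀ hx₀)
        have hF := barrier_upper hUE hS hFK
          (N₁ := (2 * μ * A * Real.exp (-μ * ‖x₀ - c‖ ^ 2)) • 1)
          (N₂ := (4 * μ ^ 2 * A * Real.exp (-μ * ‖x₀ - c‖ ^ 2)) •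
            Matrix.vecMulVec (WithLp.ofLp (x₀ - c)) (WithLp.ofLp (x₀ - c)))
          (Matrix.PosSemidef.one.smul (by positivity))
          ((Matrix.posSemidef_vecMulVec_self_star _).smul (by positivity))
          ((2 * μ * -A * Real.exp (-μ * ‖x₀ - c‖ ^ 2)) • (x₀ - c)) (r := z (n + 1) x₀)
          (by linarith [hb0 x₀ hx₀]) hx₀ ht
        have e1 : (2 * μ * -A * Real.exp (-μ * ‖x₀ - c‖ ^ 2)) • (1 : Matrix (Fin d) (Fin d) ℝ)
            - (4 * μ ^ 2 * -A * Real.exp (-μ * ‖x₀ - c‖ ^ 2)) •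
            Matrix.vecMulVec (WithLp.ofLp (x₀ - c)) (WithLp.ofLp (x₀ - c))
            = (4 * μ ^ 2 * A * Real.exp (-μ * ‖x₀ - c‖ ^ 2)) •
              Matrix.vecMulVec (WithLp.ofLp (x₀ - c)) (WithLp.ofLp (x₀ - c))
              - (2 * μ * A * Real.exp (-μ * ‖x₀ - c‖ ^ 2)) • (1 : Matrix (Fin d) (Fin d) ℝ) := by
          simp only [mul_neg, neg_mul, neg_smul]; abel
        have e2 : ‖(2 * μ * -A * Real.exp (-μ * ‖x₀ - c‖ ^ 2)) • (x₀ - c)‖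
            = ‖(2 * μ * A * Real.exp (-μ * ‖x₀ - c‖ ^ 2)) • (x₀ - c)‖ := by
          simp only [mul_neg, neg_mul, neg_smul, norm_neg]
        rw [e1] at hv
        rw [e2] at hF
        have hlt2 : z (n + 1) x₀ / h < z n x₀ / h := by
          gcongr
          exact hlt.trans_le (neg_le_of_abs_le (ih x₀ hx₀))
        linarith
      intro x hx
      exact abs_le.2 ⟨hlo x hx, hup x hx⟩
  refine (hbnd n x hx).trans ?_
  have hRx := hc x hx
  have h1 : Real.exp (-μ * R ^ 2) - Real.exp (-μ * ‖x - c‖ ^ 2)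
      ≤ μ * (‖x - c‖ ^ 2 - R ^ 2) := by
    set s := μ * (‖x - c‖ ^ 2 - R ^ 2) with hs
    have hs0 : 0 ≤ s := mul_nonneg hμ.le (by nlinarith)
    have e : Real.exp (-μ * ‖x - c‖ ^ 2) = Real.exp (-μ * R ^ 2) * Real.exp (-s) := by
      rw [← Real.exp_add]; congr 1; rw [hs]; ring
    have a1 : Real.exp (-μ * R ^ 2) ≤ 1 := Real.exp_le_one_iff.2 (by nlinarith [sq_nonneg R])
    have a2 := Real.add_one_le_exp (-s)
    have a3 := (Real.exp_pos (-μ * R ^ 2)).le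
    rw [e]; nlinarith
  have h2 : ‖x - c‖ - R ≤ ‖x - y‖ := by
    have : ‖x - c‖ ≤ ‖x - y‖ + ‖y - c‖ := norm_sub_le_norm_sub_add_norm_sub x y c
    linarith
  have h3 : ‖x - c‖ + R ≤ 2 * ρ := by
    have := hcρ x hx
    have : R ≤ ρ := by rw [hρ]; linarith [le_max_right (2 * Δ) 0]
    linarith
  calc b x ≤ A * (μ * (‖x - c‖ ^ 2 - R ^ 2)) := mul_le_mul_of_nonneg_left h1 hA
    _ = A * μ * ((‖x - c‖ + R) * (‖x - c‖ - R)) := by ring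
    _ ≤ A * μ * ((2 * ρ) * ‖x - y‖) := by
        refine mul_le_mul_of_nonneg_left ?_ (by positivity)
        exact mul_le_mul h3 h2 (by linarith) (by positivity)
    _ = _ := by ring

/-! ### Uniform estimates for the Rothe approximations -/

lemma JetSub.translate {d : ℕ} {Ω D : Set (Eucl d)}
    {G : Matrix (Fin d) (Fin d) ℝ → Eucl d → ℝ → Eucl d → ℝ} {g u : Eucl d → ℝ}
    (h : JetSub Ω G g u) (ξ : Eucl d) (hD : ∀ x ∈ D, x + ξ ∈ Ω) :
    JetSub D (fun M P r x => G M P r (x + ξ)) (fun x => g (x + ξ)) (fun x => u (x + ξ)) := by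
  intro x₀ hx₀ p X hX hev
  refine h (x₀ + ξ) (hD x₀ hx₀) p X hX ?_
  have ht : Tendsto (fun x => x - ξ) (𝓝 (x₀ + ξ)) (𝓝 x₀) := by
    have : Continuous fun x : Eucl d => x - ξ := by fun_prop
    simpa using this.tendsto (x₀ + ξ)
  filter_upwards [ht.eventually hev] with x hx
  rwa [sub_add_cancel, sub_sub, add_comm ξ x₀] at hx

lemma JetSup.mono {d : ℕ} {Ω D : Set (Eucl d)}
    {G : Matrix (Fin d) (Fin d) ℝ → Eucl d → ℝ → Eucl d → ℝ} {g u : Eucl d → ℝ}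
    (h : JetSup Ω G g u) (hD : D ⊆ Ω) : JetSup D G g u :=
  fun x₀ hx₀ => h x₀ (hD hx₀)

section rothe

variable {d : ℕ} {lam Lam gam K C₀ : ℝ} {Ω : Set (Eucl d)}
  {F : Matrix (Fin d) (Fin d) ℝ → Eucl d → ℝ → Eucl d → ℝ → ℝ} {ω : ℝ → ℝ → ℝ} {σ₁ σ₂ : ℝ → ℝ}
  {h : ℝ} {z : ℕ → Eucl d → ℝ}

lemma rothe_continuousOn (hz0 : ∀ x, z 0 x = 0)
    (hz : ∀ m, RotheStep Ω F h m (z m) (z (m + 1))) (n : ℕ) : ContinuousOn (z n) (closure Ω) := by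
  cases n with
  | zero => exact continuousOn_const.congr fun x _ => hz0 x
  | succ n => exact (hz n).1

lemma rothe_frontier (hz0 : ∀ x, z 0 x = 0)
    (hz : ∀ m, RotheStep Ω F h m (z m) (z (m + 1))) (n : ℕ) : ∀ x ∈ frontier Ω, z n x = 0 := by
  cases n with
  | zero => exact fun x _ => hz0 x
  | succ n => exact (hz n).2.2

/-- At an interior extremum of `z 1` a constant is a test function, so `|z 1| ≤ K h`. -/
lemma rothe_first (hK : 0 ≤ K) (hΩo : IsOpen Ω) (hΩb : Bornology.IsBounded Ω)
    (hS : StructureCondition lam Lam gam ω (closure Ω) (Ici 0) F)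
    (hFK : ∀ x ∈ closure Ω, ∀ t ∈ Ici (0:ℝ), |F 0 0 0 x t| ≤ K) (hh : 0 < h)
    (hz0 : ∀ x, z 0 x = 0) (hz : ∀ m, RotheStep Ω F h m (z m) (z (m + 1))) :
    ∀ x ∈ closure Ω, |z 1 x| ≤ K * h := by
  obtain ⟨hzc, ⟨hsub, hsup⟩, hzf⟩ := hz 0
  have ht : (((0 : ℕ) : ℝ) + 1) * h ∈ Ici (0:ℝ) := by rw [mem_Ici]; positivity
  generalize (((0 : ℕ) : ℝ) + 1) * h = t at hsub hsup ht
  have hKh : 0 ≤ K * h := by positivity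
  have hint : ∀ x₀ ∈ closure Ω, x₀ ∉ frontier Ω → x₀ ∈ Ω := fun x₀ hx₀ hfr => by
    rw [hΩo.frontier_eq] at hfr
    by_contra hn; exact hfr ⟨hx₀, hn⟩
  intro x hx
  refine abs_le.2 ⟨?_, ?_⟩
  · obtain ⟨x₀, hx₀, hmin⟩ := hΩb.isCompact_closure.exists_isMinOn ⟨x, hx⟩ hzc
    refine le_trans ?_ (hmin hx)
    by_cases hfr : x₀ ∈ frontier Ω
    · rw [hzf x₀ hfr]; linarith
    by_contra! hlt
    have hj := hsup.jetSup x₀ (hint x₀ hx₀ hfr) 0 0 Matrix.isSymm_zero (by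
      filter_upwards [hΩo.mem_nhds (hint x₀ hx₀ hfr)] with y hy
      simpa [quadForm] using hmin (subset_closure hy))
    have h1 := hS.first_order (Matrix.isSymm_zero (n := Fin d)) 0 0 (r := 0) (s := z (0 + 1) x₀)
      (by linarith) hx₀ ht
    have h2 := abs_le.1 (hFK x₀ hx₀ _ ht)
    rw [hz0, zero_div] at hj
    have h3 : z (0 + 1) x₀ / h < -K := by rw [div_lt_iff₀ hh]; linarith
    simp only [sub_self, norm_zero, mul_zero, add_zero] at h1
    linarith [h2.2]
  · obtain ⟨x₀, hx₀, hmax⟩ := hΩb.isCompact_closure.exists_isMaxOn ⟨x, hx⟩ hzc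
    refine le_trans (hmax hx) ?_
    by_cases hfr : x₀ ∈ frontier Ω
    · simp only [hzf x₀ hfr]; exact hKh
    change z (0 + 1) x₀ ≤ K * h
    by_contra! hlt
    have hj := hsub.jetSub x₀ (hint x₀ hx₀ hfr) 0 0 Matrix.isSymm_zero (by
      filter_upwards [hΩo.mem_nhds (hint x₀ hx₀ hfr)] with y hy
      simpa [quadForm] using hmax (subset_closure hy))
    have h1 := hS.first_order (Matrix.isSymm_zero (n := Fin d)) 0 0 (r := z (0 + 1) x₀) (s := 0)
      (by linarith) hx₀ ht
    have h2 := abs_le.1 (hFK x₀ hx₀ _ ht)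
    rw [hz0, zero_div] at hj
    have h3 : K < z (0 + 1) x₀ / h := by rw [lt_div_iff₀ hh]; linarith
    simp only [sub_self, norm_zero, mul_zero, add_zero] at h1
    linarith [h2.1]

/-- Increment bound: each comparison of consecutive steps costs at most `h σ₂(h) ≤ C₀ h²`. -/
lemma rothe_increment (hlam : 0 ≤ lam) (hLam : 0 ≤ Lam) (hgam : 0 ≤ gam) (hK : 0 ≤ K)
    (hC₀ : 0 ≤ C₀) (hΩo : IsOpen Ω) (hΩb : Bornology.IsBounded Ω)
    (hUE : UniformlyElliptic lam Lam (closure Ω) (Ici 0) F)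
    (hS : StructureCondition lam Lam gam ω (closure Ω) (Ici 0) F)
    (hσ₁ : IsModulus σ₁) (hσ₂ : IsModulus σ₂)
    (hjoint : ∀ (M : Matrix (Fin d) (Fin d) ℝ) (P : Eucl d) (r : ℝ),
      ∀ x ∈ closure Ω, ∀ y ∈ closure Ω, ∀ t ∈ Ici (0:ℝ), ∀ s ∈ Ici (0:ℝ),
        |F M P r x t - F M P r y s| ≤ σ₁ ‖x - y‖ + σ₂ |t - s|)
    (hσ₂lin : ∀ h ∈ Ioc (0:ℝ) 1, σ₂ h ≤ C₀ * h)
    (hFK : ∀ x ∈ closure Ω, ∀ t ∈ Ici (0:ℝ), |F 0 0 0 x t| ≤ K) (hh : h ∈ Ioc (0:ℝ) 1)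
    (hz0 : ∀ x, z 0 x = 0) (hz : ∀ m, RotheStep Ω F h m (z m) (z (m + 1))) (n : ℕ) :
    ∀ x ∈ closure Ω, |z (n + 1) x - z n x| ≤ (K + n * C₀ * h) * h := by
  have hh0 : 0 < h := hh.1
  induction n with
  | zero =>
    intro x hx
    simpa [hz0] using rothe_first hK hΩo hΩb hS hFK hh0 hz0 hz x hx
  | succ n ih =>
    obtain ⟨hzc, ⟨hsub, hsup⟩, hzf⟩ := hz n
    obtain ⟨hzc', ⟨hsub', hsup'⟩, hzf'⟩ := hz (n + 1)
    set B := (K + n * C₀ * h) * h with hB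
    have hB0 : 0 ≤ B := by positivity
    have ht : ((n : ℝ) + 1) * h ∈ Ici (0:ℝ) := by rw [mem_Ici]; positivity
    have ht' : (((n + 1 : ℕ) : ℝ) + 1) * h ∈ Ici (0:ℝ) := by rw [mem_Ici]; positivity
    have hσt : Tendsto σ₁ (𝓝 0) (𝓝 0) := by simpa [hσ₁.2.2] using hσ₁.2.1.tendsto 0
    have hd1 : (((n + 1 : ℕ) : ℝ) + 1) * h - ((n : ℝ) + 1) * h = h := by push_cast; ring
    have hd2 : ((n : ℝ) + 1) * h - (((n + 1 : ℕ) : ℝ) + 1) * h = -h := by push_cast; ring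
    have hD : ∀ x ∈ Ω, x + (0 : Eucl d) ∈ closure Ω := fun x hx => by
      simpa using subset_closure hx
    have hG := shifted_compare hLam hlam hgam hUE hS hσ₂ hjoint (ξ₁ := 0) (ξ₂ := 0) hD hD ht' ht
    have hG' := shifted_compare hLam hlam hgam hUE hS hσ₂ hjoint (ξ₁ := 0) (ξ₂ := 0) hD hD ht ht'
    simp only [add_zero] at hG hG'
    have hzn := rothe_continuousOn hz0 hz n
    have hBle : max 0 (B + h * (σ₁ ‖(0 : Eucl d) - 0‖ + σ₂ h)) ≤ (K + (n + 1 : ℕ) * C₀ * h) * h := by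
      have hs := hσ₂lin h hh
      rw [sub_self, norm_zero, hσ₁.2.2, zero_add]
      refine max_le (by positivity) ?_
      have := mul_le_mul_of_nonneg_left hs hh0.le
      rw [hB]; push_cast; nlinarith
    rw [hd1, abs_of_pos hh0] at hG
    rw [hd2, abs_neg, abs_of_pos hh0] at hG'
    intro x hx
    refine abs_le.2 ⟨?_, ?_⟩
    · have := comparison hΩo hΩb (G₁ := fun M P r x => F M P r x ((n + 1) * h))
        (G₂ := fun M P r x => F M P r x (((n + 1 : ℕ) + 1) * h)) (f := z n) (g := z (n + 1))
        (m := 0) (m' := B) hh0 hσt hG'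
        hzc hzc' hzc hsub.jetSub hsup'.jetSup le_rfl
        (fun x hx => by rw [hzf x hx, hzf' x hx, sub_self])
        (fun x hx => by
          have := (abs_le.1 (ih x (subset_closure hx))).1
          linarith) x hx
      linarith
    · have := comparison hΩo hΩb (G₂ := fun M P r x => F M P r x ((n + 1) * h))
        (G₁ := fun M P r x => F M P r x (((n + 1 : ℕ) + 1) * h)) (g := z n) (f := z (n + 1))
        (m := 0) (m' := B) hh0 hσt hG
        hzc' hzc hzn hsub'.jetSub hsup.jetSup le_rfl
        (fun x hx => by rw [hzf x hx, hzf' x hx, sub_self])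
        (fun x hx => (abs_le.1 (ih x (subset_closure hx))).2) x hx
      linarith

/-- Spatial modulus of continuity: comparing `z n` with its translate on `Ω ∩ (Ω - ξ)`, where the
boundary values are controlled by the barrier estimate, costs at most `h σ₁(|ξ|)` per step. -/
lemma rothe_spatial (hlam : 0 ≤ lam) (hLam : 0 ≤ Lam) (hgam : 0 ≤ gam)
    (hΩo : IsOpen Ω) (hΩb : Bornology.IsBounded Ω)
    (hUE : UniformlyElliptic lam Lam (closure Ω) (Ici 0) F)
    (hS : StructureCondition lam Lam gam ω (closure Ω) (Ici 0) F)
    (hσ₁ : IsModulus σ₁) (hσ₂ : IsModulus σ₂)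
    (hjoint : ∀ (M : Matrix (Fin d) (Fin d) ℝ) (P : Eucl d) (r : ℝ),
      ∀ x ∈ closure Ω, ∀ y ∈ closure Ω, ∀ t ∈ Ici (0:ℝ), ∀ s ∈ Ici (0:ℝ),
        |F M P r x t - F M P r y s| ≤ σ₁ ‖x - y‖ + σ₂ |t - s|)
    (hh : 0 < h) (hz0 : ∀ x, z 0 x = 0) (hz : ∀ m, RotheStep Ω F h m (z m) (z (m + 1)))
    {L : ℝ} (hL : 0 ≤ L)
    (hbl : ∀ n, ∀ y ∈ frontier Ω, ∀ x ∈ closure Ω, |z n x| ≤ L * ‖x - y‖) (n : ℕ) :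
    ∀ x ∈ closure Ω, ∀ y ∈ closure Ω, |z n x - z n y| ≤ L * ‖x - y‖ + n * h * σ₁ ‖x - y‖ := by
  have hσpos : ∀ s, 0 ≤ s → 0 ≤ σ₁ s := fun s hs => by
    have := hσ₁.1 hs; rwa [hσ₁.2.2] at this
  have key : ∀ x ∈ Ω, ∀ y ∈ Ω, z n x - z n y ≤ L * ‖x - y‖ + n * h * σ₁ ‖x - y‖ := by
    induction n with
    | zero =>
      intro x _ y _
      have := hσpos ‖x - y‖ (norm_nonneg _)
      simp only [hz0, sub_self]
      positivity
    | succ n ih =>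
      intro x' hx' y' hy'
      obtain ⟨ξ, hξ⟩ : ∃ ξ, ξ = x' - y' := ⟨_, rfl⟩
      obtain ⟨hzc, ⟨hsub, hsup⟩, hzf⟩ := hz n
      have hzn := rothe_continuousOn hz0 hz n
      have ht : ((n : ℝ) + 1) * h ∈ Ici (0:ℝ) := by rw [mem_Ici]; positivity
      have hσt : Tendsto σ₁ (𝓝 0) (𝓝 0) := by simpa [hσ₁.2.2] using hσ₁.2.1.tendsto 0
      set D : Set (Eucl d) := Ω ∩ {x | x + ξ ∈ Ω} with hDdef
      have hcξ : Continuous fun x : Eucl d => x + ξ := by fun_prop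
      have hDo : IsOpen D := hΩo.inter (hΩo.preimage hcξ)
      have hDb : Bornology.IsBounded D := hΩb.subset inter_subset_left
      have hcl1 : closure D ⊆ closure Ω := closure_mono inter_subset_left
      have hcl2 : ∀ x ∈ closure D, x + ξ ∈ closure Ω := fun x hx =>
        map_mem_closure (f := fun x => x + ξ) hcξ hx fun z hz => hz.2
      have hG := shifted_compare hLam hlam hgam hUE hS hσ₂ hjoint (D := D) (ξ₁ := ξ) (ξ₂ := 0)
        (fun x hx => subset_closure hx.2) (fun x hx => by simpa using subset_closure hx.1) ht ht
      simp only [add_zero, sub_zero, sub_self, abs_zero, hσ₂.2.2] at hG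
      have hB0 : 0 ≤ L * ‖ξ‖ := by positivity
      have hs0 := hσpos ‖ξ‖ (norm_nonneg _)
      have := comparison hDo hDb (G₁ := fun M P r x => F M P r (x + ξ) ((n + 1) * h))
        (G₂ := fun M P r x => F M P r x ((n + 1) * h)) (f := fun x => z n (x + ξ)) (g := z n)
        (m := L * ‖ξ‖) (m' := L * ‖ξ‖ + n * h * σ₁ ‖ξ‖) hh hσt hG
        (hzc.comp hcξ.continuousOn hcl2) (hzc.mono hcl1) (hzn.mono hcl1)
        (hsub.jetSub.translate ξ fun x hx => hx.2) (hsup.jetSup.mono inter_subset_left) hB0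
        (fun x hx => by
          -- A boundary point of `Ω ∩ (Ω - ξ)` has `x` or `x + ξ` on the boundary of `Ω`.
          have hxc : x ∈ closure D := frontier_subset_closure hx
          rw [hDo.frontier_eq] at hx
          by_cases hxΩ : x ∈ Ω
          · have hxξ : x + ξ ∈ frontier Ω := by
              rw [hΩo.frontier_eq]
              exact ⟨hcl2 x hxc, fun hn => hx.2 ⟨hxΩ, hn⟩⟩
            have h1 := hbl (n + 1) _ hxξ x (hcl1 hxc)
            rw [sub_add_cancel_left, norm_neg] at h1
            simp only [Function.comp_apply, hzf _ hxξ]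
            linarith [neg_abs_le (z (n + 1) x)]
          · have hxf : x ∈ frontier Ω := by
              rw [hΩo.frontier_eq]; exact ⟨hcl1 hxc, hxΩ⟩
            have h1 := hbl (n + 1) x hxf _ (hcl2 x hxc)
            rw [add_sub_cancel_left] at h1
            simp only [Function.comp_apply, hzf _ hxf]
            linarith [le_abs_self (z (n + 1) (x + ξ))])
        (fun x hx => by
          have := ih (x + ξ) hx.2 x hx.1
          rwa [add_sub_cancel_left] at this)
        y' (subset_closure ⟨hy', by simpa [hξ] using hx'⟩)
      simp only [Function.comp_apply, hξ, add_sub_cancel] at this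
      refine this.trans (max_le ?_ ?_)
      · have := hσpos ‖x' - y'‖ (norm_nonneg _)
        have : 0 ≤ ((n + 1 : ℕ) : ℝ) * h * σ₁ ‖x' - y'‖ := by positivity
        linarith
      · push_cast; linarith
  have key2 : ∀ x ∈ Ω, ∀ y ∈ Ω, |z n x - z n y| ≤ L * ‖x - y‖ + n * h * σ₁ ‖x - y‖ := by
    intro x hx y hy
    refine abs_le.2 ⟨?_, key x hx y hy⟩
    have := key y hy x hx
    rw [norm_sub_rev y x] at this
    linarith
  have hzn := rothe_continuousOn hz0 hz n
  intro x hx y hy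
  have hmem : (x, y) ∈ closure (Ω ×ˢ Ω) := by rw [closure_prod_eq]; exact ⟨hx, hy⟩
  have hc1 : ContinuousOn (fun p : Eucl d × Eucl d => |z n p.1 - z n p.2|)
      (closure Ω ×ˢ closure Ω) :=
    ((hzn.comp continuousOn_fst fun p hp => hp.1).sub
      (hzn.comp continuousOn_snd fun p hp => hp.2)).abs
  have hc2 : Continuous (fun p : Eucl d × Eucl d =>
      L * ‖p.1 - p.2‖ + n * h * σ₁ ‖p.1 - p.2‖) := by
    have := hσ₁.2.1
    fun_prop
  exact ContinuousWithinAt.closure_le hmem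
    ((hc1 (x, y) ⟨hx, hy⟩).mono (prod_mono subset_closure subset_closure))
    hc2.continuousWithinAt (fun p hp => key2 p.1 hp.1 p.2 hp.2)

end rothe

/-! ### The interpolants and their limits -/

/-- Arzelà–Ascoli on a compact set, in the form of a uniformly convergent subsequence. -/
lemma ascoli_subseq {α : Type*} [PseudoMetricSpace α] {S : Set α} (hS : IsCompact S)
    {f : ℕ → α → ℝ} {B : ℝ} (hB : ∀ k, ∀ x ∈ S, |f k x| ≤ B)
    (hE : ∀ x ∈ S, ∀ ε > 0, ∃ δ > 0, ∀ y ∈ S, dist y x < δ → ∀ k, |f k x - f k y| < ε) :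
    ∃ ψ : ℕ → ℕ, StrictMono ψ ∧ ∃ U : α → ℝ, ContinuousOn U S ∧
      TendstoUniformlyOn (fun k => f (ψ k)) U atTop S := by
  have : CompactSpace S := isCompact_iff_compactSpace.1 hS
  have hcont : ∀ k, Continuous fun x : S => f k x := by
    intro k
    rw [Metric.continuous_iff]
    intro x ε hε
    obtain ⟨δ, hδ, h⟩ := hE x x.2 ε hε
    refine ⟨δ, hδ, fun y hy => ?_⟩
    rw [dist_comm, Real.dist_eq]
    exact h y y.2 hy k
  set g : ℕ → BoundedContinuousFunction S ℝ := fun k =>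
    BoundedContinuousFunction.mkOfCompact ⟨fun x : S => f k x, hcont k⟩ with hg
  have hcpt : IsCompact (closure (range g)) := by
    refine BoundedContinuousFunction.arzela_ascoli (Icc (-B) B) isCompact_Icc (range g) ?_ ?_
    · rintro _ x ⟨k, rfl⟩
      exact abs_le.1 (hB k x x.2)
    · intro x
      rw [Metric.equicontinuousAt_iff]
      intro ε hε
      obtain ⟨δ, hδ, h⟩ := hE x x.2 ε hε
      refine ⟨δ, hδ, ?_⟩
      rintro y hy ⟨_, k, rfl⟩
      exact h y y.2 hy k
  obtain ⟨G, -, ψ, hψ, hlim⟩ := hcpt.tendsto_subseq (x := g) fun k => subset_closure ⟨k, rfl⟩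
  classical
  refine ⟨ψ, hψ, fun x => if hx : x ∈ S then G ⟨x, hx⟩ else 0, ?_, ?_⟩
  · rw [continuousOn_iff_continuous_domRestrict]
    refine G.continuous.congr fun x => ?_
    simp
  · rw [tendstoUniformlyOn_iff_tendstoUniformly_comp_coe]
    rw [BoundedContinuousFunction.tendsto_iff_tendstoUniformly] at hlim
    have e : ((fun x => if hx : x ∈ S then G ⟨x, hx⟩ else 0) ∘ Subtype.val : S → ℝ) = G := by
      funext x; simp
    rw [e]
    exact hlim

lemma grid_bound {a : ℕ → ℝ} {C T h : ℝ} (hh : 0 < h)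
    (ha : ∀ n : ℕ, n * h ≤ T → |a (n + 1) - a n| ≤ C * h) (k j : ℕ) (hkj : ((k + j : ℕ) : ℝ) * h ≤ T) :
    |a (k + j) - a k| ≤ C * (j * h) := by
  induction j with
  | zero => simp
  | succ j ih =>
    have h1 : ((k + j : ℕ) : ℝ) * h ≤ T := by
      push_cast at hkj ⊢; nlinarith
    have h2 := ih h1
    have h3 := ha (k + j) h1
    have h4 := abs_sub_le (a (k + (j + 1))) (a (k + j)) (a k)
    rw [← add_assoc] at h4 ⊢
    push_cast
    linarith

lemma rotheInterp_lip {d : ℕ} {z : ℕ → Eucl d → ℝ} {C T h : ℝ} (hh : 0 < h)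
    {x : Eucl d} (hz : ∀ n : ℕ, n * h ≤ T → |z (n + 1) x - z n x| ≤ C * h)
    {t s : ℝ} (ht : t ∈ Icc 0 T) (hs : s ∈ Icc 0 T) :
    |rotheInterp z h x t - rotheInterp z h x s| ≤ C * |t - s| := by
  wlog hst : s ≤ t generalizing t s
  · rw [abs_sub_comm, abs_sub_comm t s]
    exact this hs ht (le_of_not_ge hst)
  have hfl : ∀ r, 0 ≤ r → (⌊r / h⌋₊ : ℝ) * h ≤ r ∧ r < (⌊r / h⌋₊ + 1 : ℝ) * h := fun r hr => by
    have h1 := Nat.floor_le (div_nonneg hr hh.le)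
    have h2 := Nat.lt_floor_add_one (r / h)
    rw [le_div_iff₀ hh] at h1
    rw [div_lt_iff₀ hh] at h2
    exact ⟨h1, h2⟩
  obtain ⟨ht1, ht2⟩ := hfl t ht.1
  obtain ⟨hs1, hs2⟩ := hfl s hs.1
  have hmono : ⌊s / h⌋₊ ≤ ⌊t / h⌋₊ := Nat.floor_mono (by gcongr)
  have et : rotheInterp z h x t = z ⌊t / h⌋₊ x
      + (t - ⌊t / h⌋₊ * h) / h * (z (⌊t / h⌋₊ + 1) x - z ⌊t / h⌋₊ x) := by
    unfold rotheInterp; field_simp; ring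
  have es : rotheInterp z h x s = z ⌊s / h⌋₊ x
      + (s - ⌊s / h⌋₊ * h) / h * (z (⌊s / h⌋₊ + 1) x - z ⌊s / h⌋₊ x) := by
    unfold rotheInterp; field_simp; ring
  have es' : rotheInterp z h x s = z (⌊s / h⌋₊ + 1) x
      - ((⌊s / h⌋₊ + 1) * h - s) / h * (z (⌊s / h⌋₊ + 1) x - z ⌊s / h⌋₊ x) := by
    unfold rotheInterp; field_simp; ring
  generalize ⌊t / h⌋₊ = m at *
  generalize ⌊s / h⌋₊ = k at *
  have hslope : ∀ (r : ℝ) (n : ℕ), 0 ≤ r → n * h ≤ T →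
      |r / h * (z (n + 1) x - z n x)| ≤ C * r := fun r n hr hn => by
    rw [abs_mul, abs_of_nonneg (by positivity)]
    calc r / h * |z (n + 1) x - z n x| ≤ r / h * (C * h) := by gcongr; exact hz n hn
      _ = C * r := by field_simp
  have hmT : (m : ℝ) * h ≤ T := ht1.trans ht.2
  have hkT : (k : ℝ) * h ≤ T := hs1.trans hs.2
  rw [abs_of_nonneg (sub_nonneg.2 hst)]
  rcases hmono.eq_or_lt with heq | hlt
  · subst heq
    have h1 := hslope (t - s) k (by linarith) hkT
    have : rotheInterp z h x t - rotheInterp z h x s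
        = (t - s) / h * (z (k + 1) x - z k x) := by rw [et, es]; ring
    rwa [this]
  · -- Split at the grid points `(k + 1) h ≤ m h` lying between `s` and `t`.
    obtain ⟨j, rfl⟩ := Nat.exists_eq_add_of_lt hlt
    have h1 := hslope (t - ((k + j + 1 : ℕ) : ℝ) * h) _ (by linarith) hmT
    have h2 := hslope ((k + 1) * h - s) k (by linarith) hkT
    have h3 := grid_bound (a := fun n => z n x) hh hz (k + 1) j
      (by rw [show k + 1 + j = k + j + 1 by ring]; exact hmT)
    rw [show k + 1 + j = k + j + 1 by ring] at h3
    have e : rotheInterp z h x t - rotheInterp z h x s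
        = (t - ((k + j + 1 : ℕ) : ℝ) * h) / h * (z (k + j + 1 + 1) x - z (k + j + 1) x)
          + (z (k + j + 1) x - z (k + 1) x)
          + ((k + 1) * h - s) / h * (z (k + 1) x - z k x) := by rw [et, es']; ring
    rw [e]
    refine (abs_add_three _ _ _).trans ?_
    push_cast at h1 h2 h3 ⊢
    linarith

lemma rotheInterp_spatial {d : ℕ} {z : ℕ → Eucl d → ℝ} {T h B : ℝ} (hh : 0 < h) (hh1 : h ≤ 1)
    {x y : Eucl d} (hz : ∀ n : ℕ, n * h ≤ T + 1 → |z n x - z n y| ≤ B)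
    {t : ℝ} (ht : t ∈ Icc 0 T) :
    |rotheInterp z h x t - rotheInterp z h y t| ≤ B := by
  have h1 := Nat.floor_le (div_nonneg ht.1 hh.le)
  have h2 := Nat.lt_floor_add_one (t / h)
  rw [le_div_iff₀ hh] at h1
  rw [div_lt_iff₀ hh] at h2
  unfold rotheInterp
  generalize ⌊t / h⌋₊ = m at *
  have a1 := hz m (by linarith [ht.2])
  have a2 := hz (m + 1) (by push_cast; linarith [ht.2])
  have p1 : 0 ≤ ((m + 1 : ℝ) * h - t) / h := div_nonneg (by linarith) hh.le
  have p2 : 0 ≤ (t - (m : ℝ) * h) / h := div_nonneg (by linarith) hh.le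
  have ps : ((m + 1 : ℝ) * h - t) / h + (t - (m : ℝ) * h) / h = 1 := by field_simp; ring
  generalize ((m + 1 : ℝ) * h - t) / h = α at *
  generalize (t - (m : ℝ) * h) / h = β at *
  have e : α * z m x + β * z (m + 1) x - (α * z m y + β * z (m + 1) y)
      = α * (z m x - z m y) + β * (z (m + 1) x - z (m + 1) y) := by ring
  rw [e]
  calc |α * (z m x - z m y) + β * (z (m + 1) x - z (m + 1) y)|
      ≤ α * |z m x - z m y| + β * |z (m + 1) x - z (m + 1) y| := by
        refine (abs_add_le _ _).trans ?_
        rw [abs_mul, abs_mul, abs_of_nonneg p1, abs_of_nonneg p2]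
    _ ≤ α * B + β * B := by gcongr
    _ = B := by rw [← add_mul, ps, one_mul]


/-- **Existence of the Rothe limit.**  Under the standing hypotheses, every sequence
`h_k ↓ 0` admits a subsequence along which the Rothe interpolants converge uniformly on
`closure Ω × [0,T]` to a continuous limit, and there is a constant `C`, independent of the
sequence and of the limit, such that any such uniform limit `U` satisfies
`|U(x,t) - U(x,s)| ≤ C|t - s|`. -/
theorem rothe_limit_exists (d : ℕ) (T lam Lam gam C₀ K : ℝ)
    (hT : 0 < T) (hlam : 0 < lam) (hlL : lam ≤ Lam) (hgam : 0 ≤ gam)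
    (hC₀ : 0 ≤ C₀) (hK : 0 ≤ K)
    (Ω : Set (Eucl d)) (hΩopen : IsOpen Ω) (hΩbdd : Bornology.IsBounded Ω)
    (hΩsm : HasSmoothBoundary Ω)
    (F : Matrix (Fin d) (Fin d) ℝ → Eucl d → ℝ → Eucl d → ℝ → ℝ)
    (ω : ℝ → ℝ → ℝ) (σ₁ σ₂ : ℝ → ℝ)
    (hFcont : ContinuousOn
      (fun q : Matrix (Fin d) (Fin d) ℝ × Eucl d × ℝ × Eucl d × ℝ =>
        F q.1 q.2.1 q.2.2.1 q.2.2.2.1 q.2.2.2.2)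
      (univ ×ˢ univ ×ˢ univ ×ˢ closure Ω ×ˢ Ici 0))
    (hUE : UniformlyElliptic lam Lam (closure Ω) (Ici 0) F)
    (hStruct : StructureCondition lam Lam gam ω (closure Ω) (Ici 0) F)
    (hσ₁ : IsModulus σ₁) (hσ₂ : IsModulus σ₂)
    (hjoint : ∀ (M : Matrix (Fin d) (Fin d) ℝ) (P : Eucl d) (r : ℝ),
      ∀ x ∈ closure Ω, ∀ y ∈ closure Ω, ∀ t ∈ Ici (0:ℝ), ∀ s ∈ Ici (0:ℝ),
        |F M P r x t - F M P r y s| ≤ σ₁ ‖x - y‖ + σ₂ |t - s|)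
    (hσ₂lin : ∀ h ∈ Ioc (0:ℝ) 1, σ₂ h ≤ C₀ * h)
    (hFK : ∀ x ∈ closure Ω, ∀ t ∈ Ici (0:ℝ), |F 0 0 0 x t| ≤ K)
    (Z : ℝ → ℕ → Eucl d → ℝ)
    (hZ : ∀ h ∈ Ioc (0:ℝ) 1, (∀ x, Z h 0 x = 0) ∧
      ∀ m : ℕ, RotheStep Ω F h m (Z h m) (Z h (m + 1))) :
    ∃ C : ℝ,
      (∀ hk : ℕ → ℝ, (∀ k, hk k ∈ Ioc (0:ℝ) 1) → Antitone hk →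
          Tendsto hk atTop (nhds 0) →
        ∃ ψ : ℕ → ℕ, StrictMono ψ ∧
          ∃ U : Eucl d × ℝ → ℝ, ContinuousOn U (closure Ω ×ˢ Icc 0 T) ∧
            TendstoUniformlyOn
              (fun k (p : Eucl d × ℝ) => rotheInterp (Z (hk (ψ k))) (hk (ψ k)) p.1 p.2)
              U atTop (closure Ω ×ˢ Icc 0 T)) ∧
      (∀ hk : ℕ → ℝ, (∀ k, hk k ∈ Ioc (0:ℝ) 1) → Antitone hk →
          Tendsto hk atTop (nhds 0) →
        ∀ U : Eucl d × ℝ → ℝ,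
          TendstoUniformlyOn
            (fun k (p : Eucl d × ℝ) => rotheInterp (Z (hk k)) (hk k) p.1 p.2)
            U atTop (closure Ω ×ˢ Icc 0 T) →
          ∀ x ∈ closure Ω, ∀ t ∈ Icc (0:ℝ) T, ∀ s ∈ Icc (0:ℝ) T,
            |U (x, t) - U (x, s)| ≤ C * |t - s|) := by
  have hLam : 0 ≤ Lam := hlam.le.trans hlL
  obtain ⟨L, hL, hbl⟩ :=
    boundary_lip hlam hLam hgam hK hΩopen hΩbdd hΩsm hUE hStruct hFK
  obtain ⟨C, hCdef⟩ : ∃ C, C = K + C₀ * T := ⟨_, rfl⟩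
  have hC : 0 ≤ C := by rw [hCdef]; positivity
  have hσpos : ∀ s, 0 ≤ s → 0 ≤ σ₁ s := fun s hs => by
    have := hσ₁.1 hs; rwa [hσ₁.2.2] at this
  have hinc : ∀ h ∈ Ioc (0:ℝ) 1, ∀ x ∈ closure Ω, ∀ n : ℕ, n * h ≤ T →
      |Z h (n + 1) x - Z h n x| ≤ C * h := by
    intro h hh x hx n hn
    refine (rothe_increment hlam.le hLam hgam hK hC₀ hΩopen hΩbdd hUE hStruct hσ₁ hσ₂ hjoint
      hσ₂lin hFK hh (hZ h hh).1 (hZ h hh).2 n x hx).trans ?_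
    refine mul_le_mul_of_nonneg_right ?_ hh.1.le
    rw [hCdef]
    nlinarith
  have htime : ∀ h ∈ Ioc (0:ℝ) 1, ∀ x ∈ closure Ω, ∀ t ∈ Icc (0:ℝ) T, ∀ s ∈ Icc (0:ℝ) T,
      |rotheInterp (Z h) h x t - rotheInterp (Z h) h x s| ≤ C * |t - s| :=
    fun h hh x hx t ht s hs => rotheInterp_lip hh.1 (hinc h hh x hx) ht hs
  have hspace : ∀ h ∈ Ioc (0:ℝ) 1, ∀ x ∈ closure Ω, ∀ y ∈ closure Ω, ∀ t ∈ Icc (0:ℝ) T,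
      |rotheInterp (Z h) h x t - rotheInterp (Z h) h y t|
        ≤ L * ‖x - y‖ + (T + 1) * σ₁ ‖x - y‖ := by
    intro h hh x hx y hy t ht
    refine rotheInterp_spatial hh.1 hh.2 (fun n hn => ?_) ht
    refine (rothe_spatial hlam.le hLam hgam hΩopen hΩbdd hUE hStruct hσ₁ hσ₂ hjoint hh.1
      (hZ h hh).1 (hZ h hh).2 hL (hbl h hh.1 _ (hZ h hh).1 (hZ h hh).2) n x hx y hy).trans ?_
    have := mul_le_mul_of_nonneg_right hn (hσpos ‖x - y‖ (norm_nonneg _))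
    linarith
  have hbound : ∀ h ∈ Ioc (0:ℝ) 1, ∀ x ∈ closure Ω, ∀ t ∈ Icc (0:ℝ) T,
      |rotheInterp (Z h) h x t| ≤ C * T := by
    intro h hh x hx t ht
    have h0 : rotheInterp (Z h) h x 0 = 0 := by simp [rotheInterp, (hZ h hh).1]
    have := htime h hh x hx t ht 0 ⟨le_rfl, hT.le⟩
    rw [h0, sub_zero, sub_zero, abs_of_nonneg ht.1] at this
    exact this.trans (mul_le_mul_of_nonneg_left ht.2 hC)
  refine ⟨C, fun hk hhk _ _ => ?_, fun hk hhk _ _ U hU x hx t ht s hs => ?_⟩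
  · have hcpt : IsCompact (closure Ω ×ˢ Icc (0:ℝ) T) :=
      hΩbdd.isCompact_closure.prod isCompact_Icc
    refine ascoli_subseq (f := fun k (p : Eucl d × ℝ) => rotheInterp (Z (hk k)) (hk k) p.1 p.2)
      hcpt (B := C * T) (fun k p hp => hbound _ (hhk k) _ hp.1 _ hp.2) ?_
    rintro ⟨x, t⟩ ⟨hx, ht⟩ ε hε
    -- The joint modulus of all the interpolants at `(x, t)`.
    have hcm : Continuous fun q : Eucl d × ℝ =>
        L * ‖x - q.1‖ + (T + 1) * σ₁ ‖x - q.1‖ + C * |t - q.2| := by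
      have := hσ₁.2.1
      fun_prop
    obtain ⟨δ, hδ, hδε⟩ := Metric.continuous_iff.1 hcm (x, t) ε hε
    refine ⟨δ, hδ, fun q hq hqd k => ?_⟩
    have h1 := hδε q hqd
    simp only [sub_self, norm_zero, hσ₁.2.2, abs_zero, mul_zero, add_zero, Real.dist_eq,
      sub_zero] at h1
    have h2 := hspace _ (hhk k) x hx q.1 hq.1 t ht
    have h3 := htime _ (hhk k) q.1 hq.1 t ht q.2 hq.2
    have h4 := abs_sub_le (rotheInterp (Z (hk k)) (hk k) x t)
      (rotheInterp (Z (hk k)) (hk k) q.1 t) (rotheInterp (Z (hk k)) (hk k) q.1 q.2)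
    have h5 := le_abs_self (L * ‖x - q.1‖ + (T + 1) * σ₁ ‖x - q.1‖ + C * |t - q.2|)
    exact lt_of_le_of_lt (by linarith) h1
  · have l1 := hU.tendsto_at (x := (x, t)) ⟨hx, ht⟩
    have l2 := hU.tendsto_at (x := (x, s)) ⟨hx, hs⟩
    exact le_of_tendsto (l1.sub l2).abs
      (Eventually.of_forall fun k => htime _ (hhk k) x hx t ht s hs)

end
end

section
/- Let Ω ⊂ ℝⁿ be a bounded open set with smooth boundary, T > 0, and let F be continuous, uniformly elliptic with constants 0 < λ ≤ Λ, satisfying the structure condition with constant γ, the joint modulus bound |F(M,P,r,x,t) - F(M,P,r,y,s)| ≤ σ₁(|x-y|) + σ₂(|t-s|) with σ₂(h) ≤ C₀h, and sup_{(x,t)}|F(0,0,0,x,t)| ≤ K. Suppose that for every h ∈ (0,1] the Rothe approximations z_{n,h} exist, let U_h be the Rothe interpolants, and suppose h_k ↓ 0 is a sequence such that U_{h_k} converges uniformly on Ω̄ × [0,T] to a continuous function U. Then U is a viscosity solution of u_t + F(D²u, Du, u, x, t) = 0 in Ω × (0,T]: for every φ ∈ C^{2,1} and every ε > 0 such that φ_t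 + F(D²φ, Dφ, φ, x, t) ≥ ε > 0 pointwise, the function U - φ cannot attain a local maximum value of 0, and for every φ ∈ C^{2,1} and ε > 0 such that φ_t + F(D²φ, Dφ, φ, x, t) ≤ -ε < 0 pointwise, the function U - φ cannot attain a local minimum value of 0. -/
/-!
This is the stability argument for monotone time discretizations: it combines the viscosity
inequalities of the discrete steps with the continuity of `F`.

Suppose `U - φ` has a local maximum `0` at `(x₀, t₀)`. Adding `‖x - x₀‖⁴ + (t - t₀)²` to `φ`
(`penal`) makes the maximum strict without changing the derivatives entering the equation at
`(x₀, t₀)`; call the sum `ψ`. At grid times the interpolant `U_h` equals the discrete solution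
(`rotheInterp_grid`), so for small `h` the maximum of `z_m(x) - ψ(x, mh)` over the grid points of a
small closed cylinder is attained at some `(x, mh)` near `(x₀, t₀)`. There `x` is an interior local
maximum of `z_m - ψ(·, mh)`, so the discrete equation can be tested with `ψ(·, mh)`; comparing the
times `mh` and `(m-1)h` at the same `x` gives
`(z_m(x) - z_{m-1}(x)) / h ≥ (ψ(x, mh) - ψ(x, (m-1)h)) / h = ψ_t(x, τ)`. Hence
`ψ_t(x, τ) + F(D²ψ, Dψ, z_m(x), x, mh) ≤ 0` arbitrarily close to `(x₀, t₀)`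
(`exists_discrete_contact`), and continuity of `F` contradicts `φ_t + F ≥ ε`
(`parabolicViscSubsol_of_discrete`). The supersolution half is the subsolution half for
`-F(-M, -P, -r, x, t)`, `-z` and `-U`.
-/

open scoped RealInnerProductSpace
open MeasureTheory Filter Topology Asymptotics Metric Set

noncomputable section

/-! ### Derivatives of test functions -/

lemma contDiff_one_partial {d : ℕ} {f : Eucl d → ℝ} (hf : ContDiff ℝ 2 f) (v : Eucl d) :
    ContDiff ℝ 1 (fun y => fderiv ℝ f y v) :=
  (hf.fderiv_right (m := 1) (by norm_num)).clm_apply contDiff_const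

lemma gradAt_add {d : ℕ} {f g : Eucl d → ℝ} (hf : ContDiff ℝ 2 f) (hg : ContDiff ℝ 2 g)
    (x : Eucl d) : gradAt (fun y => f y + g y) x = gradAt f x + gradAt g x := by
  ext i
  have h1 := (hf.differentiable (by norm_num)) x
  have h2 := (hg.differentiable (by norm_num)) x
  simp [gradAt, fderiv_fun_add h1 h2]

lemma hessAt_add {d : ℕ} {f g : Eucl d → ℝ} (hf : ContDiff ℝ 2 f) (hg : ContDiff ℝ 2 g)
    (x : Eucl d) : hessAt (fun y => f y + g y) x = hessAt f x + hessAt g x := by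
  ext i j
  have h1 : ∀ y, fderiv ℝ (fun y => f y + g y) y = fderiv ℝ f y + fderiv ℝ g y := fun y =>
    fderiv_fun_add ((hf.differentiable (by norm_num)) y) ((hg.differentiable (by norm_num)) y)
  have h3 := ((contDiff_one_partial hf (EuclideanSpace.single j 1)).differentiable
    (by norm_num)) x
  have h4 := ((contDiff_one_partial hg (EuclideanSpace.single j 1)).differentiable
    (by norm_num)) x
  simp only [hessAt, Matrix.of_apply, Matrix.add_apply, h1, add_apply]
  rw [fderiv_fun_add h3 h4]
  rfl

lemma gradAt_neg {d : ℕ} (f : Eucl d → ℝ) (x : Eucl d) :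
    gradAt (fun y => - f y) x = - gradAt f x := by
  ext i
  simp [gradAt, fderiv_fun_neg]

lemma hessAt_neg {d : ℕ} (f : Eucl d → ℝ) (x : Eucl d) :
    hessAt (fun y => - f y) x = - hessAt f x := by
  ext i j
  simp [hessAt, fderiv_fun_neg]

lemma gradAt_const {d : ℕ} (c : ℝ) (x : Eucl d) : gradAt (fun _ => c) x = 0 := by
  ext i
  simp [gradAt]

lemma hessAt_const {d : ℕ} (c : ℝ) (x : Eucl d) : hessAt (fun _ => c) x = 0 := by
  ext i j
  simp [hessAt]

lemma continuous_gradAt {d : ℕ} {f : Eucl d → ℝ} (hf : ContDiff ℝ 2 f) :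
    Continuous (gradAt f) := by
  unfold gradAt
  refine (EuclideanSpace.equiv (Fin d) ℝ).symm.continuous.comp (continuous_pi fun i => ?_)
  exact (contDiff_one_partial hf _).continuous

lemma continuous_hessAt {d : ℕ} {f : Eucl d → ℝ} (hf : ContDiff ℝ 2 f) :
    Continuous (hessAt f) := by
  unfold hessAt
  refine continuous_matrix fun i j => ?_
  exact ((contDiff_one_partial hf _).continuous_fderiv (by norm_num)).clm_apply continuous_const

lemma C21.add {d : ℕ} {φ ψ : Eucl d → ℝ → ℝ} (hφ : C21 φ) (hψ : C21 ψ) :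
    C21 (fun x t => φ x t + ψ x t) := by
  obtain ⟨a1, a2, a3, a4, a5, a6⟩ := hφ
  obtain ⟨b1, b2, b3, b4, b5, b6⟩ := hψ
  refine ⟨fun t => (a1 t).add (b1 t), fun x => (a2 x).add (b2 x), a3.add b3, ?_, ?_, ?_⟩
  · simp only [hessAt_add (a1 _) (b1 _)]
    exact a4.add b4
  · simp only [gradAt_add (a1 _) (b1 _)]
    exact a5.add b5
  · have h : ∀ p : Eucl d × ℝ, deriv (fun t => φ p.1 t + ψ p.1 t) p.2
        = deriv (φ p.1) p.2 + deriv (ψ p.1) p.2 := fun p =>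
      deriv_fun_add ((a2 p.1).differentiable (by norm_num) _)
        ((b2 p.1).differentiable (by norm_num) _)
    simp only [h]
    exact a6.add b6

lemma C21.neg {d : ℕ} {φ : Eucl d → ℝ → ℝ} (hφ : C21 φ) : C21 (fun x t => - φ x t) := by
  obtain ⟨a1, a2, a3, a4, a5, a6⟩ := hφ
  refine ⟨fun t => (a1 t).neg, fun x => (a2 x).neg, a3.neg, ?_, ?_, ?_⟩
  · simp only [hessAt_neg]
    exact a4.neg
  · simp only [gradAt_neg]
    exact a5.neg
  · have h : ∀ p : Eucl d × ℝ, deriv (fun t => - φ p.1 t) p.2 = - deriv (φ p.1) p.2 := fun p =>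
      deriv.fun_neg
    simp only [h]
    exact a6.neg

/-- The penalization `‖x - x₀‖⁴ + (t - t₀)²`, whose first and second order space derivatives and
time derivative all vanish at `(x₀, t₀)`. -/
def penal {d : ℕ} (x₀ : Eucl d) (t₀ : ℝ) (x : Eucl d) (t : ℝ) : ℝ :=
  (‖x - x₀‖ ^ 2) ^ 2 + (t - t₀) ^ 2

lemma contDiff_dist_sq {d : ℕ} (x₀ : Eucl d) : ContDiff ℝ 2 (fun x : Eucl d => ‖x - x₀‖ ^ 2) :=
  (contDiff_id.sub contDiff_const).norm_sq ℝ

lemma fderiv_quartic {d : ℕ} (x₀ y : Eucl d) :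
    fderiv ℝ (fun x : Eucl d => (‖x - x₀‖ ^ 2) ^ 2) y
      = (2 * ‖y - x₀‖ ^ 2) • fderiv ℝ (fun x : Eucl d => ‖x - x₀‖ ^ 2) y := by
  have h := ((contDiff_dist_sq x₀).differentiable (by norm_num) y).hasFDerivAt.pow 2
  rw [h.fderiv]
  simp

lemma gradAt_quartic {d : ℕ} (x₀ : Eucl d) :
    gradAt (fun x : Eucl d => (‖x - x₀‖ ^ 2) ^ 2) x₀ = 0 := by
  ext i
  simp [gradAt, fderiv_quartic]

lemma hessAt_quartic {d : ℕ} (x₀ : Eucl d) :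
    hessAt (fun x : Eucl d => (‖x - x₀‖ ^ 2) ^ 2) x₀ = 0 := by
  ext i j
  have hz : fderiv ℝ (fun x : Eucl d => ‖x - x₀‖ ^ 2) x₀ = 0 := by
    apply IsLocalMin.fderiv_eq_zero
    exact Filter.Eventually.of_forall fun x => by simp
  have h1 := ((contDiff_dist_sq x₀).differentiable (by norm_num) x₀).const_mul (2 : ℝ)
  have h2 := (contDiff_one_partial (contDiff_dist_sq x₀)
    (EuclideanSpace.single j 1)).differentiable (by norm_num) x₀
  simp only [hessAt, Matrix.of_apply, fderiv_quartic, smul_apply, smul_eq_mul]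
  rw [fderiv_fun_mul h1 h2]
  rw [fderiv_const_mul ((contDiff_dist_sq x₀).differentiable (by norm_num) x₀), hz]
  simp

lemma C21_penal {d : ℕ} (x₀ : Eucl d) (t₀ : ℝ) : C21 (penal x₀ t₀) := by
  have hq : ContDiff ℝ 2 (fun x : Eucl d => (‖x - x₀‖ ^ 2) ^ 2) := (contDiff_dist_sq x₀).pow 2
  have hd : ∀ p : Eucl d × ℝ, deriv (penal x₀ t₀ p.1) p.2 = 2 * (p.2 - t₀) := by
    intro p
    have h : HasDerivAt (penal x₀ t₀ p.1) (2 * (p.2 - t₀)) p.2 := by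
      have := (((hasDerivAt_id p.2).sub_const t₀).pow 2).const_add ((‖p.1 - x₀‖ ^ 2) ^ 2)
      refine HasDerivAt.congr_deriv (f := penal x₀ t₀ p.1) this ?_
      simp
    exact h.deriv
  refine ⟨fun t => hq.add contDiff_const, fun x => ?_, ?_, ?_, ?_, ?_⟩
  · exact contDiff_const.add ((contDiff_id.sub contDiff_const).pow 2)
  · unfold penal
    fun_prop
  · simp only [penal, hessAt_add hq contDiff_const, hessAt_const, add_zero]
    exact (continuous_hessAt hq).comp continuous_fst
  · simp only [penal, gradAt_add hq contDiff_const, gradAt_const, add_zero]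
    exact (continuous_gradAt hq).comp continuous_fst
  · simp only [hd]
    fun_prop

lemma penal_derivatives {d : ℕ} (x₀ : Eucl d) (t₀ : ℝ) :
    hessAt (fun x => penal x₀ t₀ x t₀) x₀ = 0 ∧ gradAt (fun x => penal x₀ t₀ x t₀) x₀ = 0 ∧
      deriv (penal x₀ t₀ x₀) t₀ = 0 := by
  have hq : ContDiff ℝ 2 (fun x : Eucl d => (‖x - x₀‖ ^ 2) ^ 2) := (contDiff_dist_sq x₀).pow 2
  refine ⟨?_, ?_, ?_⟩
  · simp only [penal, hessAt_add hq contDiff_const, hessAt_const, hessAt_quartic, add_zero]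
  · simp only [penal, gradAt_add hq contDiff_const, gradAt_const, gradAt_quartic, add_zero]
  · apply IsLocalMin.deriv_eq_zero
    exact Filter.Eventually.of_forall fun t => by simp [penal]; positivity

/-! ### The discrete maximum argument -/

/-- If every discrete step is a viscosity subsolution and the limit `U` touches the test function
`ψ` from below at `(x₀, t₀)` with a margin `penal`, then near `(x₀, t₀)` there is a contact point
of some discrete step: a space-time grid point `(x, t)` and an intermediate time `τ`
(from the mean value theorem) at which the discrete equation yields the parabolic inequality. -/
lemma exists_discrete_contact {d : ℕ} {T : ℝ} {Ω : Set (Eucl d)} (hΩ : IsOpen Ω)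
    {F : Matrix (Fin d) (Fin d) ℝ → Eucl d → ℝ → Eucl d → ℝ → ℝ}
    {w : ℕ → ℕ → Eucl d → ℝ} {hk : ℕ → ℝ} (hpos : ∀ k, 0 < hk k)
    (hk0 : Tendsto hk atTop (nhds 0))
    (hwc : ∀ k m, ContinuousOn (w k (m + 1)) (closure Ω))
    (hsub : ∀ k (m : ℕ), ViscSubsol Ω (fun M P r x => F M P r x ((m + 1) * hk k) + r / hk k)
      (fun x => w k m x / hk k) (w k (m + 1)))
    {U : Eucl d × ℝ → ℝ} (hUcont : ContinuousOn U (closure Ω ×ˢ Icc 0 T))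
    (hgrid : ∀ δ > 0, ∀ᶠ k in atTop, ∀ m : ℕ, (m : ℝ) * hk k ≤ T → ∀ x ∈ closure Ω,
      |w k m x - U (x, m * hk k)| < δ)
    {ψ : Eucl d → ℝ → ℝ} (hψ : C21 ψ) {x₀ : Eucl d} {t₀ : ℝ} (hx₀ : x₀ ∈ Ω)
    (ht₀ : t₀ ∈ Ioc 0 T)
    (hmax : ∀ᶠ p in 𝓝[Ω ×ˢ Ioc 0 T] (x₀, t₀), U p - ψ p.1 p.2 ≤ - penal x₀ t₀ p.1 p.2)
    (heq : U (x₀, t₀) = ψ x₀ t₀) {ρ : ℝ} (hρ : 0 < ρ) :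
    ∃ x ∈ Ω, ∃ t r τ : ℝ, 0 ≤ t ∧ dist x x₀ < ρ ∧ dist t t₀ < ρ ∧ dist r (ψ x₀ t₀) < ρ ∧
      dist τ t₀ < ρ ∧
      deriv (ψ x) τ + F (hessAt (fun y => ψ y t) x) (gradAt (fun y => ψ y t) x) r x t ≤ 0 := by
  have hΩcl : Ω ⊆ closure Ω := subset_closure
  have hmem : (x₀, t₀) ∈ closure Ω ×ˢ Icc (0 : ℝ) T :=
    ⟨hΩcl hx₀, ht₀.1.le, ht₀.2⟩
  have hV : ContinuousOn (fun p : Eucl d × ℝ => U p - ψ p.1 p.2) (closure Ω ×ˢ Icc 0 T) :=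
    hUcont.sub hψ.2.2.1.continuousOn
  obtain ⟨r₁, hr₁, H₁⟩ := Metric.mem_nhdsWithin_iff.1 hmax
  obtain ⟨r₂, hr₂, H₂⟩ := Metric.isOpen_iff.1 hΩ x₀ hx₀
  obtain ⟨r₃, hr₃, H₃⟩ := Metric.continuousWithinAt_iff.1 (hUcont _ hmem) (ρ / 2) (by linarith)
  -- All the constraints on the radius `r` of the cylinder around `(x₀, t₀)`.
  obtain ⟨r, hr, hrlt⟩ : ∃ r > 0, r < min (min r₁ r₂) (min r₃ (min ρ t₀)) :=
    exists_between (by have := ht₀.1; simp only [lt_min_iff]; tauto)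
  simp only [lt_min_iff] at hrlt
  obtain ⟨⟨hrr₁, hrr₂⟩, hrr₃, hrρ, hrt⟩ := hrlt
  have hball : closedBall x₀ r ⊆ Ω := fun y hy =>
    H₂ (lt_of_le_of_lt (mem_closedBall.1 hy) hrr₂)
  -- `c` bounds the penalization from below outside the cylinder of half the radius.
  obtain ⟨c, hc, hcs⟩ : ∃ c > 0, ∀ x : Eucl d, ∀ t : ℝ, penal x₀ t₀ x t < c →
      dist x x₀ < r / 2 ∧ dist t t₀ < r / 2 := by
    refine ⟨min (((r / 2) ^ 2) ^ 2) ((r / 2) ^ 2), by positivity, fun x t h => ?_⟩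
    rw [lt_min_iff] at h
    unfold penal at h
    constructor
    · have h' : (‖x - x₀‖ ^ 2) ^ 2 < ((r / 2) ^ 2) ^ 2 := by nlinarith [sq_nonneg (t - t₀), h.1]
      rw [dist_eq_norm]
      exact lt_of_pow_lt_pow_left₀ 2 (by positivity)
        (lt_of_pow_lt_pow_left₀ 2 (by positivity) h')
    · have h' : |t - t₀| ^ 2 < (r / 2) ^ 2 := by
        rw [sq_abs]
        nlinarith [sq_nonneg (‖x - x₀‖ ^ 2), h.2]
      rw [Real.dist_eq]
      exact lt_of_pow_lt_pow_left₀ 2 (by positivity) h'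
  obtain ⟨r₄, hr₄, H₄⟩ := Metric.continuousWithinAt_iff.1 (hV _ hmem) (c / 4) (by linarith)
  obtain ⟨k, hkg, hksmall⟩ := ((hgrid (min (c / 4) (ρ / 2)) (by positivity)).and
    (hk0.eventually_lt_const (show (0 : ℝ) < min (r / 2) r₄ by positivity))).exists
  set h := hk k with hh
  have hp : 0 < h := hpos k
  rw [lt_min_iff] at hksmall
  have hw : ∀ m : ℕ, (m : ℝ) * h ≤ T → ∀ x ∈ closure Ω,
      |w k m x - U (x, m * h)| < c / 4 ∧ |w k m x - U (x, m * h)| < ρ / 2 := fun m hm x hx =>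
    lt_min_iff.1 (hkg m hm x hx)
  -- The compact set of grid points over which the discrete solution minus `ψ` is maximized.
  let S : Set ℕ := {m | |(m : ℝ) * h - t₀| ≤ r ∧ (m : ℝ) * h ≤ T}
  have hSfin : S.Finite := by
    refine (Set.finite_Iic ⌊T / h⌋₊).subset fun m hm => ?_
    exact Nat.le_floor ((le_div_iff₀ hp).2 hm.2)
  have hSpos : ∀ m ∈ S, 0 < (m : ℝ) * h := by
    intro m hm
    have := (abs_le.1 hm.1).1
    linarith
  have hScases : ∀ m ∈ S, ∃ n, m = n + 1 := by
    intro m hm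
    refine Nat.exists_eq_succ_of_ne_zero fun h0 => ?_
    have := hSpos m hm
    simp [h0] at this
  have hcomp : IsCompact (closedBall x₀ r ×ˢ S) :=
    (isCompact_closedBall x₀ r).prod hSfin.isCompact
  have hcont : ContinuousOn (fun p : Eucl d × ℕ => w k p.2 p.1 - ψ p.1 (p.2 * h))
      (closedBall x₀ r ×ˢ S) := by
    rw [continuousOn_prod_of_discrete_right]
    intro m
    by_cases hm : m ∈ S
    · obtain ⟨n, rfl⟩ := hScases m hm
      refine ContinuousOn.sub ((hwc k n).mono fun y hy => hΩcl (hball hy.1)) ?_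
      exact (hψ.1 (((n + 1 : ℕ) : ℝ) * h)).continuous.continuousOn
    · have : {a : Eucl d | (a, m) ∈ closedBall x₀ r ×ˢ S} = ∅ := by
        ext y
        simp [hm]
      rw [this]
      exact continuousOn_empty _
  -- The last grid time not exceeding `t₀`.
  obtain ⟨m₀, hm₀⟩ : ∃ m₀ : ℕ, (m₀ : ℝ) * h ≤ t₀ ∧ t₀ - h < m₀ * h := by
    refine ⟨⌊t₀ / h⌋₊, ?_, ?_⟩
    · exact (le_div_iff₀ hp).1 (Nat.floor_le (div_nonneg ht₀.1.le hp.le))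
    · have := (div_lt_iff₀ hp).1 (Nat.lt_floor_add_one (t₀ / h))
      linarith
  have hm₀S : m₀ ∈ S := by
    refine ⟨abs_le.2 ⟨by linarith, by linarith⟩, by linarith [ht₀.2]⟩
  obtain ⟨⟨x, m⟩, ⟨hxb, hmS⟩, hxm⟩ := hcomp.exists_isMaxOn
    ⟨(x₀, m₀), mem_closedBall_self hr.le, hm₀S⟩ hcont
  simp only at hxb hmS
  have hmax' : ∀ y ∈ closedBall x₀ r, ∀ n ∈ S,
      w k n y - ψ y (n * h) ≤ w k m x - ψ x (m * h) := fun y hy n hn =>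
    hxm (a := (y, n)) ⟨hy, hn⟩
  have hxΩ := hball hxb
  -- Comparison with `(x₀, m₀ h)` localizes the maximum point.
  have hloc : dist x x₀ < r / 2 ∧ dist ((m : ℝ) * h) t₀ < r / 2 := by
    apply hcs
    have e1 := hmax' x₀ (mem_closedBall_self hr.le) m₀ hm₀S
    have e2 := (abs_lt.1 (hw m₀ hm₀S.2 x₀ (hΩcl hx₀)).1).1
    have e3 := (abs_lt.1 (hw m hmS.2 x (hΩcl hxΩ)).1).2
    have e4 : |(U (x₀, m₀ * h) - ψ x₀ (m₀ * h)) - (U (x₀, t₀) - ψ x₀ t₀)| < c / 4 := by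
      have := H₄ (x := (x₀, (m₀ : ℝ) * h)) ⟨hΩcl hx₀, (hSpos m₀ hm₀S).le, hm₀S.2⟩ (by
        rw [Prod.dist_eq, dist_self, max_lt_iff, Real.dist_eq, abs_lt]
        exact ⟨hr₄, by linarith, by linarith⟩)
      rwa [Real.dist_eq] at this
    rw [heq, sub_self, sub_zero] at e4
    have e5 := (abs_lt.1 e4).1
    have e6 : U (x, m * h) - ψ x (m * h) ≤ - penal x₀ t₀ x (m * h) := by
      refine H₁ (a := (x, (m : ℝ) * h)) ⟨?_, hxΩ, hSpos m hmS, hmS.2⟩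
      rw [mem_ball, Prod.dist_eq, max_lt_iff, Real.dist_eq]
      exact ⟨lt_of_le_of_lt (mem_closedBall.1 hxb) hrr₁, lt_of_le_of_lt hmS.1 hrr₁⟩
    linarith
  obtain ⟨hxd, htd⟩ := hloc
  obtain ⟨n, rfl⟩ := hScases m hmS
  push_cast at *
  rw [Real.dist_eq] at htd
  obtain ⟨htd1, htd2⟩ := abs_lt.1 htd
  have hT' : ((n : ℝ) + 1) * h ≤ T := by exact_mod_cast hmS.2
  have hnS : n ∈ S :=
    ⟨abs_le.2 ⟨by linarith, by linarith⟩, by linarith⟩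
  obtain ⟨τ, ⟨hτ1, hτ2⟩, hτ⟩ := exists_deriv_eq_slope (ψ x) (a := n * h) (b := (n + 1) * h)
    (by linarith) (hψ.2.1 x).continuous.continuousOn
    ((hψ.2.1 x).differentiable (by norm_num)).differentiableOn
  have hvisc := hsub k n x hxΩ (fun y => ψ y ((n + 1) * h)) (hψ.1 _).contDiffAt (by
    filter_upwards [isOpen_ball.mem_nhds (show x ∈ ball x₀ r from
      lt_trans (mem_ball.1 hxd) (by linarith))] with y hy
    have := hmax' y (ball_subset_closedBall hy) (n + 1) hmS
    push_cast at this
    exact this)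
  have htime := hmax' x hxb n hnS
  have hwU := (hw (n + 1) (by push_cast; exact hT') x (hΩcl hxΩ)).2
  push_cast at hwU
  have hUU : |U (x, (n + 1) * h) - U (x₀, t₀)| < ρ / 2 := by
    have := H₃ (x := (x, ((n : ℝ) + 1) * h))
      ⟨hΩcl hxΩ, by positivity, hT'⟩ (by
        rw [Prod.dist_eq, max_lt_iff, Real.dist_eq]
        exact ⟨by linarith, by linarith⟩)
    rwa [Real.dist_eq] at this
  refine ⟨x, hxΩ, (n + 1) * h, w k (n + 1) x, τ, by positivity, by linarith, ?_, ?_, ?_, ?_⟩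
  · rw [Real.dist_eq]
    linarith
  · rw [← heq, Real.dist_eq]
    have := abs_sub_le (w k (n + 1) x) (U (x, (n + 1) * h)) (U (x₀, t₀))
    linarith
  · rw [Real.dist_eq, abs_lt]
    constructor <;> linarith
  · have hslope : deriv (ψ x) τ ≤ w k (n + 1) x / h - w k n x / h := by
      rw [hτ, ← sub_div, show ((n : ℝ) + 1) * h - n * h = h by ring]
      exact (div_le_div_iff_of_pos_right hp).2 (by linarith)
    simp only at hvisc
    linarith

lemma parabolicViscSubsol_of_discrete {d : ℕ} {T : ℝ} {Ω : Set (Eucl d)} (hΩ : IsOpen Ω)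
    {F : Matrix (Fin d) (Fin d) ℝ → Eucl d → ℝ → Eucl d → ℝ → ℝ}
    (hFcont : ContinuousOn
      (fun q : Matrix (Fin d) (Fin d) ℝ × Eucl d × ℝ × Eucl d × ℝ =>
        F q.1 q.2.1 q.2.2.1 q.2.2.2.1 q.2.2.2.2)
      (univ ×ˢ univ ×ˢ univ ×ˢ closure Ω ×ˢ Ici 0))
    {w : ℕ → ℕ → Eucl d → ℝ} {hk : ℕ → ℝ} (hpos : ∀ k, 0 < hk k)
    (hk0 : Tendsto hk atTop (nhds 0))
    (hwc : ∀ k m, ContinuousOn (w k (m + 1)) (closure Ω))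
    (hsub : ∀ k (m : ℕ), ViscSubsol Ω (fun M P r x => F M P r x ((m + 1) * hk k) + r / hk k)
      (fun x => w k m x / hk k) (w k (m + 1)))
    {U : Eucl d × ℝ → ℝ} (hUcont : ContinuousOn U (closure Ω ×ˢ Icc 0 T))
    (hgrid : ∀ δ > 0, ∀ᶠ k in atTop, ∀ m : ℕ, (m : ℝ) * hk k ≤ T → ∀ x ∈ closure Ω,
      |w k m x - U (x, m * hk k)| < δ) :
    ParabolicViscSubsol Ω T F U := by
  rintro φ hφ ε hε hineq ⟨⟨x₀, t₀⟩, ⟨hx₀, ht₀⟩, hlm, h0⟩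
  simp only at hx₀ ht₀ h0
  let ψ : Eucl d → ℝ → ℝ := fun x t => φ x t + penal x₀ t₀ x t
  have hpen := C21_penal x₀ t₀
  have hψ : C21 ψ := hφ.add hpen
  obtain ⟨hp1, hp2, hp3⟩ := penal_derivatives x₀ t₀
  have hψ0 : ψ x₀ t₀ = φ x₀ t₀ := by simp [ψ, penal]
  have hψh : hessAt (fun y => ψ y t₀) x₀ = hessAt (fun y => φ y t₀) x₀ := by
    simp only [ψ]
    rw [hessAt_add (hφ.1 t₀) (hpen.1 t₀), hp1, add_zero]
  have hψg : gradAt (fun y => ψ y t₀) x₀ = gradAt (fun y => φ y t₀) x₀ := by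
    simp only [ψ]
    rw [gradAt_add (hφ.1 t₀) (hpen.1 t₀), hp2, add_zero]
  have hψt : deriv (ψ x₀) t₀ = deriv (φ x₀) t₀ := by
    simp only [ψ]
    rw [deriv_fun_add ((hφ.2.1 x₀).differentiable (by norm_num) _)
      ((hpen.2.1 x₀).differentiable (by norm_num) _), hp3, add_zero]
  have hstart := hineq x₀ (subset_closure hx₀) t₀ ⟨ht₀.1.le, ht₀.2⟩
  rw [← hψh, ← hψg, ← hψt, ← hψ0] at hstart
  -- The operator evaluated on `ψ`, with the value slot and the time of `ψ_t` as free variables.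
  let A : Eucl d × ℝ × ℝ × ℝ → ℝ := fun p => deriv (ψ p.1) p.2.2.2 +
    F (hessAt (fun y => ψ y p.2.1) p.1) (gradAt (fun y => ψ y p.2.1) p.1) p.2.2.1 p.1 p.2.1
  have hA : ContinuousOn A (closure Ω ×ˢ Ici 0 ×ˢ univ) := by
    obtain ⟨-, -, -, c1, c2, c3⟩ := hψ
    refine ContinuousOn.add ?_ ?_
    · exact (c3.comp (f := fun p : Eucl d × ℝ × ℝ × ℝ => (p.1, p.2.2.2))
        (by fun_prop)).continuousOn
    · have hin : Continuous (fun p : Eucl d × ℝ × ℝ × ℝ =>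
          (hessAt (fun y => ψ y p.2.1) p.1, gradAt (fun y => ψ y p.2.1) p.1, p.2.2.1, p.1,
            p.2.1)) :=
        (c1.comp (f := fun p : Eucl d × ℝ × ℝ × ℝ => (p.1, p.2.1)) (by fun_prop)).prodMk
          ((c2.comp (f := fun p : Eucl d × ℝ × ℝ × ℝ => (p.1, p.2.1)) (by fun_prop)).prodMk
            (by fun_prop))
      exact hFcont.comp hin.continuousOn fun p hp =>
        ⟨trivial, trivial, trivial, hp.1, hp.2.1⟩
  obtain ⟨ρ, hρ, H⟩ := Metric.continuousWithinAt_iff.1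
    (hA (x₀, t₀, ψ x₀ t₀, t₀) ⟨subset_closure hx₀, ht₀.1.le, trivial⟩) ε hε
  obtain ⟨x, hx, t, r, τ, ht, d1, d2, d3, d4, hle⟩ := exists_discrete_contact hΩ hpos hk0 hwc hsub
    hUcont hgrid hψ hx₀ ht₀ (by
      filter_upwards [hlm] with p hp
      simp only [ψ]
      linarith) (by rw [hψ0]; linarith) hρ
  have hd := H (x := (x, t, r, τ)) ⟨subset_closure hx, ht, trivial⟩ (by
    simp only [Prod.dist_eq, max_lt_iff]
    exact ⟨d1, d2, d3, d4⟩)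
  rw [Real.dist_eq] at hd
  have := (abs_lt.1 hd).1
  simp only [A] at this
  linarith

/-! ### Supersolutions by reflection -/

lemma ViscSupersol.reflect {d : ℕ} {Ω : Set (Eucl d)}
    {G : Matrix (Fin d) (Fin d) ℝ → Eucl d → ℝ → Eucl d → ℝ} {g u : Eucl d → ℝ}
    (hu : ViscSupersol Ω G g u) :
    ViscSubsol Ω (fun M P r x => - G (-M) (-P) (-r) x) (fun x => - g x) (fun x => - u x) := by
  intro x₀ hx₀ φ hφ hmax
  have h := hu x₀ hx₀ (fun x => - φ x) hφ.neg (by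
    filter_upwards [hmax] with x hx
    linarith)
  rw [hessAt_neg, gradAt_neg] at h
  simpa using h

lemma ParabolicViscSubsol.reflect {d : ℕ} {T : ℝ} {Ω : Set (Eucl d)}
    {F : Matrix (Fin d) (Fin d) ℝ → Eucl d → ℝ → Eucl d → ℝ → ℝ} {u : Eucl d × ℝ → ℝ}
    (hu : ParabolicViscSubsol Ω T (fun M P r x t => - F (-M) (-P) (-r) x t) (fun p => - u p)) :
    ParabolicViscSupersol Ω T F u := by
  rintro φ hφ ε hε hineq ⟨p, hp, hmin, h0⟩
  refine hu (fun x t => - φ x t) hφ.neg ε hε ?_ ⟨p, hp, ?_, by linarith⟩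
  · intro x hx t ht
    have h := hineq x hx t ht
    have hd : deriv (fun s => - φ x s) t = - deriv (φ x) t := deriv.fun_neg
    simp only [hessAt_neg, gradAt_neg, neg_neg, hd]
    linarith
  · filter_upwards [hmin] with q hq
    linarith

lemma rotheInterp_grid {d : ℕ} (z : ℕ → Eucl d → ℝ) {h : ℝ} (hp : 0 < h) (m : ℕ) (x : Eucl d) :
    rotheInterp z h x (m * h) = z m x := by
  have hf : ⌊(m : ℝ) * h / h⌋₊ = m := by
    rw [mul_div_cancel_right₀ _ hp.ne', Nat.floor_natCast]
  unfold rotheInterp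
  rw [hf]
  field_simp
  ring

/-- **Rothe limits are viscosity solutions.**  Under the standing hypotheses, if the Rothe
interpolants `U_{h_k}` converge uniformly on `closure Ω × [0,T]` along a sequence
`h_k ↓ 0` to a continuous `U`, then `U` is a viscosity solution of
`u_t + F(D²u, Du, u, x, t) = 0` in `Ω × (0,T]` in the sense of the paper. -/
theorem rothe_limit_is_viscosity_solution (d : ℕ) (T lam Lam gam C₀ K : ℝ)
    (hT : 0 < T) (hlam : 0 < lam) (hlL : lam ≤ Lam) (hgam : 0 ≤ gam)
    (hC₀ : 0 ≤ C₀) (hK : 0 ≤ K)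
    (Ω : Set (Eucl d)) (hΩopen : IsOpen Ω) (hΩbdd : Bornology.IsBounded Ω)
    (hΩsm : HasSmoothBoundary Ω)
    (F : Matrix (Fin d) (Fin d) ℝ → Eucl d → ℝ → Eucl d → ℝ → ℝ)
    (ω : ℝ → ℝ → ℝ) (σ₁ σ₂ : ℝ → ℝ)
    (hFcont : ContinuousOn
      (fun q : Matrix (Fin d) (Fin d) ℝ × Eucl d × ℝ × Eucl d × ℝ =>
        F q.1 q.2.1 q.2.2.1 q.2.2.2.1 q.2.2.2.2)
      (univ ×ˢ univ ×ˢ univ ×ˢ closure Ω ×ˢ Ici 0))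
    (hUE : UniformlyElliptic lam Lam (closure Ω) (Ici 0) F)
    (hStruct : StructureCondition lam Lam gam ω (closure Ω) (Ici 0) F)
    (hσ₁ : IsModulus σ₁) (hσ₂ : IsModulus σ₂)
    (hjoint : ∀ (M : Matrix (Fin d) (Fin d) ℝ) (P : Eucl d) (r : ℝ),
      ∀ x ∈ closure Ω, ∀ y ∈ closure Ω, ∀ t ∈ Ici (0:ℝ), ∀ s ∈ Ici (0:ℝ),
        |F M P r x t - F M P r y s| ≤ σ₁ ‖x - y‖ + σ₂ |t - s|)
    (hσ₂lin : ∀ h ∈ Ioc (0:ℝ) 1, σ₂ h ≤ C₀ * h)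
    (hFK : ∀ x ∈ closure Ω, ∀ t ∈ Ici (0:ℝ), |F 0 0 0 x t| ≤ K)
    (Z : ℝ → ℕ → Eucl d → ℝ)
    (hZ : ∀ h ∈ Ioc (0:ℝ) 1, (∀ x, Z h 0 x = 0) ∧
      ∀ m : ℕ, RotheStep Ω F h m (Z h m) (Z h (m + 1)))
    (hk : ℕ → ℝ) (hhk : ∀ k, hk k ∈ Ioc (0:ℝ) 1) (hanti : Antitone hk)
    (hk0 : Tendsto hk atTop (nhds 0))
    (U : Eucl d × ℝ → ℝ) (hUcont : ContinuousOn U (closure Ω ×ˢ Icc 0 T))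
    (hUlim : TendstoUniformlyOn
      (fun k (p : Eucl d × ℝ) => rotheInterp (Z (hk k)) (hk k) p.1 p.2)
      U atTop (closure Ω ×ˢ Icc 0 T)) :
    ParabolicViscSubsol Ω T F U ∧ ParabolicViscSupersol Ω T F U := by
  have hpos : ∀ k, 0 < hk k := fun k => (hhk k).1
  have hgrid : ∀ δ > 0, ∀ᶠ k in atTop, ∀ m : ℕ, (m : ℝ) * hk k ≤ T → ∀ x ∈ closure Ω,
      |Z (hk k) m x - U (x, m * hk k)| < δ := by
    intro δ hδ
    filter_upwards [Metric.tendstoUniformlyOn_iff.1 hUlim δ hδ] with k hkδ m hm x hx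
    have h := hkδ (x, m * hk k) ⟨hx, mul_nonneg m.cast_nonneg (hpos k).le, hm⟩
    simp only [rotheInterp_grid _ (hpos k)] at h
    rwa [dist_comm, Real.dist_eq] at h
  refine ⟨parabolicViscSubsol_of_discrete hΩopen hFcont hpos hk0
    (fun k m => ((hZ _ (hhk k)).2 m).1) (fun k m => ((hZ _ (hhk k)).2 m).2.1.1) hUcont hgrid,
    ParabolicViscSubsol.reflect ?_⟩
  refine parabolicViscSubsol_of_discrete (w := fun k m x => - Z (hk k) m x) hΩopen ?_ hpos hk0
    (fun k m => ((hZ _ (hhk k)).2 m).1.neg) (fun k m => ?_) hUcont.neg ?_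
  · refine (hFcont.comp (f := fun q : Matrix (Fin d) (Fin d) ℝ × Eucl d × ℝ × Eucl d × ℝ =>
      (-q.1, -q.2.1, -q.2.2.1, q.2.2.2.1, q.2.2.2.2)) ?_ ?_).neg
    · exact Continuous.continuousOn (by fun_prop)
    · exact fun q hq => ⟨trivial, trivial, trivial, hq.2.2.2⟩
  · have h := ((hZ _ (hhk k)).2 m).2.1.2.reflect
    convert h using 2
    · ext P r x
      ring
    · ring
  · intro δ hδ
    filter_upwards [hgrid δ hδ] with k hkδ m hm x hx
    have h := hkδ m hm x hx
    rwa [← abs_neg, show -(-Z (hk k) m x - -U (x, m * hk k))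
      = Z (hk k) m x - U (x, m * hk k) by ring]

end
end
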